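/- Bandit online distributed composite mirror descent (Theorem 2): In the BanODCMD setting described in the context, for every node j ∈ {1,…,m} and every comparator x★ ∈ K, the expected average regularized regret satisfies E[ (1/T) Σ_{t=1}^{T} Σ_{i=1}^{m} ( ℓ_{i,t}(x_{j,t}) + r(x_{j,t}) − ℓ_{i,t}(x★) − r(x★) ) ] ≤ B_0/T + B_1/(η T) + B_2 η + (B_3/T) Σ_{t=1}^{T} √(η ρ_t) + (B_4/T) Σ_{t=1}^{T} √(ρ_t/η) + B_5 δ + B_6 ξ, where B_0 = (2θ/(1−κ)) (G_ℓ + G_r) Σ_{i=1}^{m} N(x_{i,1}), B_1 = Σ_{i=1}^{m} V_ω( (1−ξ) x★, x_{i,1} ), B_2 = (m/σ_ω) ( (p̄ p̄_* d G_ℓ)²/2 + G_r ( p̄ p̄_* d G_ℓ + G_r ) + (2θ/(1−κ)) (G_ℓ + G_r) ( p̄ p̄_* d G_ℓ + G_r ) ), B_3 = m √(2/σ_ω) ( p̄ p̄_* d G_ℓ + (2θ/(1−κ)) (G_ℓ + G_r) ), B_4 = 4 m √(2/σ_ω) p̄ G_ω R̄, B_5 = 2 m G_ℓ, and B_6 =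 m p̄ (G_ℓ + G_r) R̄. -/

import Mathlib

open MeasureTheory
open scoped RealInnerProductSpace Pointwise ProbabilityTheory

/-- Euclidean space `ℝ^d` with the Euclidean inner product and Euclidean norm. -/
abbrev Euc (d : ℕ) := EuclideanSpace ℝ (Fin d)

/-- The dual norm of `N`: `N_*(g) = sup {⟪g, x⟫ : N x ≤ 1}`. -/
noncomputable def dualNorm (d : ℕ) (N : Euc d → ℝ) (g : Euc d) : ℝ :=
  sSup ((fun x => ⟪g, x⟫) '' {x : Euc d | N x ≤ 1})

/-- The backward product `P(t,τ) = W(t) W(t-1) ⋯ W(τ)` of a sequence of matrices. -/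
noncomputable def backProd {m : ℕ} (W : ℕ → Matrix (Fin m) (Fin m) ℝ) (t τ : ℕ) :
    Matrix (Fin m) (Fin m) ℝ :=
  ((List.range (t + 1 - τ)).map fun k => W (t - k)).prod

/-!
The symmetric difference `(d / 2δ) (f (x + δ v) - f (x - δ v)) v` with `v` uniform on the sphere is
nearly a subgradient in mean. For convex `f`, comparing the chords through `x` and through the
comparator bounds the mean linearization error by `2 δ G`, because rotation invariance forces
`E ⟪w, v⟫² = ‖w‖² / d`; no differentiability of `f` and no smoothed surrogate is needed.

What remains is pathwise. The Bregman divergence to the comparator telescopes because doubly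
stochastic averaging does not increase its sum over the nodes. Each local step moves its iterate by
`O(η + √(ηρ))`, so geometric mixing bounds the total disagreement between the nodes by a geometric
series in these displacements.
-/

section TwoPointGradient

variable {E : Type*} [NormedAddCommGroup E] [InnerProductSpace ℝ E]

/-- The two-point bandit estimator `(d / 2δ) (f (x + δ v) - f (x - δ v)) v` of the gradient of `f`
at `x`, where `d` is the dimension of the space and `v` the random direction. -/
noncomputable def twoPointGradient (f : E → ℝ) (δ : ℝ) (x v : E) : E :=
  (Module.finrank ℝ E / (2 * δ) * (f (x + δ • v) - f (x - δ • v))) • v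

theorem continuous_twoPointGradient {f : E → ℝ} (hf : Continuous f) (δ : ℝ) :
    Continuous fun p : E × E => twoPointGradient f δ p.1 p.2 := by
  unfold twoPointGradient; fun_prop

theorem norm_twoPointGradient_le {f : E → ℝ} {δ G : ℝ} (hδ : 0 < δ) {x v : E} (hv : ‖v‖ = 1)
    (hf : |f (x + δ • v) - f (x - δ • v)| ≤ 2 * δ * G) :
    ‖twoPointGradient f δ x v‖ ≤ Module.finrank ℝ E * G := by
  rw [twoPointGradient, norm_smul, hv, mul_one, norm_mul, Real.norm_of_nonneg (by positivity),
    Real.norm_eq_abs]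
  calc Module.finrank ℝ E / (2 * δ) * |f (x + δ • v) - f (x - δ • v)|
      ≤ Module.finrank ℝ E / (2 * δ) * (2 * δ * G) := by gcongr
    _ = Module.finrank ℝ E * G := by field_simp

theorem inner_twoPointGradient (f : E → ℝ) (δ : ℝ) (x v w : E) :
    ⟪twoPointGradient f δ x v, w⟫ =
      Module.finrank ℝ E / (2 * δ) * (f (x + δ • v) - f (x - δ • v)) * ⟪w, v⟫ := by
  rw [twoPointGradient, real_inner_smul_left, real_inner_comm]

theorem mul_sub_le_of_convexOn {V : Type*} [AddCommGroup V] [Module ℝ V] {f : V → ℝ}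
    (hf : ConvexOn ℝ Set.univ f) (p w : V) {a : ℝ} (ha : 0 ≤ a) :
    a * (f p - f (p - w)) ≤ f (p + a • w) - f p := by
  have hp : (1 / (1 + a)) • (p + a • w) + (a / (1 + a)) • (p - w) = p := by
    match_scalars
    · field_simp
    · field_simp; ring
  have h := hf.2 (Set.mem_univ (p + a • w)) (Set.mem_univ (p - w))
    (show 0 ≤ 1 / (1 + a) by positivity) (show 0 ≤ a / (1 + a) by positivity) (by field_simp)
  rw [hp, smul_eq_mul, smul_eq_mul, one_div_mul_eq_div, div_mul_eq_mul_div, ← add_div,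
    le_div_iff₀ (by positivity)] at h
  linarith

theorem two_mul_sq_mul_le_of_eq_add {f : E → ℝ} (hf : ConvexOn ℝ Set.univ f) {x z v v' : E}
    {δ gap c : ℝ} (hδ : 0 ≤ δ) (hv : ‖v‖ = 1) (hv' : ‖v'‖ = 1) (h : v = v' + (2 * c) • (x - z))
    (hgap : ∀ b : E, ‖b‖ = 1 → gap ≤ f (x + δ • b) - f (z + δ • b)) :
    2 * δ * c ^ 2 * gap ≤ c * (f (x + δ • v) - f (x + δ • v')) := by
  wlog hc : 0 ≤ c generalizing v v' c
  · have := this (c := -c) hv' hv (by rw [h]; module) (by linarith)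
    linarith
  have hline := mul_sub_le_of_convexOn hf (x + δ • v') (x - z) (a := 2 * δ * c) (by positivity)
  rw [show x + δ • v' + (2 * δ * c) • (x - z) = x + δ • v by rw [h]; module,
    show x + δ • v' - (x - z) = z + δ • v' by abel] at hline
  calc 2 * δ * c ^ 2 * gap = c * (2 * δ * c * gap) := by ring
    _ ≤ c * (2 * δ * c * (f (x + δ • v') - f (z + δ • v'))) := by gcongr; exact hgap v' hv'
    _ ≤ c * (f (x + δ • v) - f (x + δ • v')) := by gcongr

theorem reflection_orthogonal_singleton_apply (w v : E) :
    (ℝ ∙ w)ᗮ.reflection v = v - (2 * (⟪w, v⟫ / ‖w‖ ^ 2)) • w := by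
  rw [Submodule.reflection_orthogonal_apply, Submodule.reflection_singleton_apply]
  simp only [RCLike.ofReal_real_eq_id, id_eq]
  module

-- `v` and its mirror image differ by a multiple of `x - z`, so convexity along that line compares
-- the increment of `f` between them with its increment from the sphere at `z` to that at `x`.
theorem mul_inner_sq_le_inner_twoPointGradient_add_reflection {f : E → ℝ}
    (hf : ConvexOn ℝ Set.univ f) {x z v : E} {δ gap : ℝ} (hδ : 0 < δ) (hv : ‖v‖ = 1) (hxz : x ≠ z)
    (hgap : ∀ b : E, ‖b‖ = 1 → gap ≤ f (x + δ • b) - f (z + δ • b)) :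
    2 * Module.finrank ℝ E * gap / ‖x - z‖ ^ 2 * ⟪x - z, v⟫ ^ 2 ≤
      ⟪twoPointGradient f δ x v, x - z⟫ +
        ⟪twoPointGradient f δ x ((ℝ ∙ (x - z))ᗮ.reflection v), x - z⟫ := by
  have hw : 0 < ‖x - z‖ := norm_pos_iff.mpr (sub_ne_zero.mpr hxz)
  have hRv := reflection_orthogonal_singleton_apply (x - z) v
  have hRn : ‖(ℝ ∙ (x - z))ᗮ.reflection v‖ = 1 := by rw [LinearIsometryEquiv.norm_map, hv]
  set v' := (ℝ ∙ (x - z))ᗮ.reflection v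
  set c := ⟪x - z, v⟫ / ‖x - z‖ ^ 2 with hc
  have hwv : ⟪x - z, v⟫ = c * ‖x - z‖ ^ 2 := by rw [hc]; field_simp
  have hwv' : ⟪x - z, v'⟫ = -(c * ‖x - z‖ ^ 2) := by
    rw [hRv, inner_sub_right, inner_smul_right, real_inner_self_eq_norm_sq, hwv]; ring
  have hplus := two_mul_sq_mul_le_of_eq_add hf hδ.le hv hRn (c := c) (by rw [hRv]; module) hgap
  have hminus := two_mul_sq_mul_le_of_eq_add hf hδ.le (v := -v') (v' := -v) (c := c)
    (by simpa) (by simpa) (by rw [hRv]; module) hgap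
  simp only [smul_neg, ← sub_eq_add_neg] at hminus
  simp only [inner_twoPointGradient, hwv, hwv']
  calc 2 * Module.finrank ℝ E * gap / ‖x - z‖ ^ 2 * (c * ‖x - z‖ ^ 2) ^ 2
      = Module.finrank ℝ E / (2 * δ) * ‖x - z‖ ^ 2 *
          (2 * δ * c ^ 2 * gap + 2 * δ * c ^ 2 * gap) := by field_simp; ring
    _ ≤ Module.finrank ℝ E / (2 * δ) * ‖x - z‖ ^ 2 * (c * (f (x + δ • v) - f (x + δ • v')) +
          c * (f (x - δ • v') - f (x - δ • v))) := by gcongr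
    _ = _ := by ring

end TwoPointGradient

section Sphere

variable {E : Type*} [NormedAddCommGroup E] [InnerProductSpace ℝ E] [MeasurableSpace E]
  {μ : Measure E}

/-- The uniform distribution on the Euclidean unit sphere, characterised as the probability measure
carried by the sphere that is invariant under linear isometries. -/
structure IsUniformOnSphere (μ : Measure E) : Prop extends IsProbabilityMeasure μ where
  ae_norm_eq_one : ∀ᵐ v ∂μ, ‖v‖ = 1
  map_isometry : ∀ R : E ≃ₗᵢ[ℝ] E, μ.map R = μ

namespace IsUniformOnSphere

variable [BorelSpace E]

theorem integral_comp_isometry (hμ : IsUniformOnSphere μ) (R : E ≃ₗᵢ[ℝ] E) (f : E → ℝ) :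
    ∫ v, f (R v) ∂μ = ∫ v, f v ∂μ := by
  conv_rhs => rw [← hμ.map_isometry R]
  exact (integral_map_equiv R.toHomeomorph.toMeasurableEquiv f).symm

theorem integral_inner_sq_eq_of_norm_eq (hμ : IsUniformOnSphere μ) {a b : E} (hab : ‖a‖ = ‖b‖) :
    ∫ v, ⟪a, v⟫ ^ 2 ∂μ = ∫ v, ⟪b, v⟫ ^ 2 ∂μ := by
  set R := (ℝ ∙ (a - b))ᗮ.reflection
  have hR (v : E) : ⟪a, R v⟫ = ⟪b, v⟫ := by
    rw [← R.inner_map_map a (R v), Submodule.reflection_sub hab, Submodule.reflection_reflection]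
  simp only [← hμ.integral_comp_isometry R fun v => ⟪a, v⟫ ^ 2, hR]

variable [FiniteDimensional ℝ E]

theorem integrable_of_continuous (hμ : IsUniformOnSphere μ) {f : E → ℝ} (hf : Continuous f) :
    Integrable f μ := by
  have := hμ.toIsProbabilityMeasure
  obtain ⟨c, hc⟩ := (isCompact_sphere (0 : E) 1).exists_bound_of_continuousOn hf.continuousOn
  refine .of_bound hf.aestronglyMeasurable c ?_
  filter_upwards [hμ.ae_norm_eq_one] with v hv using hc v (by simpa using hv)

theorem integral_inner_sq (hμ : IsUniformOnSphere μ) (w : E) :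
    ∫ v, ⟪w, v⟫ ^ 2 ∂μ = ‖w‖ ^ 2 / Module.finrank ℝ E := by
  have := hμ.toIsProbabilityMeasure
  set b := stdOrthonormalBasis ℝ E
  have hparseval : ∀ᵐ v ∂μ, ∑ k, ⟪‖w‖ • b k, v⟫ ^ 2 = ‖w‖ ^ 2 := by
    filter_upwards [hμ.ae_norm_eq_one] with v hv
    have h := b.sum_sq_norm_inner_right v
    simp only [Real.norm_eq_abs, sq_abs] at h
    simp only [real_inner_smul_left, mul_pow, ← Finset.mul_sum, h, hv, one_pow, mul_one]
  have hsum : ∑ _k : Fin (Module.finrank ℝ E), ∫ v, ⟪w, v⟫ ^ 2 ∂μ = ‖w‖ ^ 2 := calc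
    _ = ∑ k, ∫ v, ⟪‖w‖ • b k, v⟫ ^ 2 ∂μ :=
      Finset.sum_congr rfl fun k _ =>
        hμ.integral_inner_sq_eq_of_norm_eq (by simp [norm_smul])
    _ = ∫ v, ∑ k, ⟪‖w‖ • b k, v⟫ ^ 2 ∂μ :=
      (integral_finsetSum _ fun k _ => hμ.integrable_of_continuous (by fun_prop)).symm
    _ = ‖w‖ ^ 2 := by simp [integral_congr_ae hparseval]
  rcases (Module.finrank ℝ E).eq_zero_or_pos with hd | hd
  · have := Module.finrank_zero_iff.mp hd
    simp [Subsingleton.elim w 0]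
  · rw [← hsum, Finset.sum_const, Finset.card_univ, Fintype.card_fin, nsmul_eq_mul]
    field_simp

theorem le_integral_inner_twoPointGradient (hμ : IsUniformOnSphere μ) {f : E → ℝ}
    (hf : ConvexOn ℝ Set.univ f) {x z : E} {δ gap : ℝ} (hδ : 0 < δ)
    (hgap : ∀ v : E, ‖v‖ = 1 → gap ≤ f (x + δ • v) - f (z + δ • v)) :
    gap ≤ ∫ v, ⟪twoPointGradient f δ x v, x - z⟫ ∂μ := by
  have := hμ.toIsProbabilityMeasure
  obtain ⟨b, hb⟩ := hμ.ae_norm_eq_one.exists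
  rcases eq_or_ne x z with rfl | hxz
  · simpa using hgap b hb
  have hfinrank : (Module.finrank ℝ E : ℝ) ≠ 0 := by
    have : Nontrivial E := ⟨x, z, hxz⟩
    exact_mod_cast Module.finrank_pos.ne'
  have hw : ‖x - z‖ ≠ 0 := norm_ne_zero_iff.mpr (sub_ne_zero.mpr hxz)
  have hfc : Continuous f := hf.locallyLipschitz.continuous
  have hcont : Continuous fun v => ⟪twoPointGradient f δ x v, x - z⟫ := by
    have := continuous_twoPointGradient hfc δ
    fun_prop
  set R := (ℝ ∙ (x - z))ᗮ.reflection
  have hdouble : 2 * gap ≤ 2 * ∫ v, ⟪twoPointGradient f δ x v, x - z⟫ ∂μ := calc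
    2 * gap = ∫ v, 2 * Module.finrank ℝ E * gap / ‖x - z‖ ^ 2 * ⟪x - z, v⟫ ^ 2 ∂μ := by
      rw [integral_const_mul, hμ.integral_inner_sq]; field_simp
    _ ≤ ∫ v, (⟪twoPointGradient f δ x v, x - z⟫ + ⟪twoPointGradient f δ x (R v), x - z⟫) ∂μ := by
      refine integral_mono_ae (hμ.integrable_of_continuous (by fun_prop))
        (hμ.integrable_of_continuous (hcont.add (hcont.comp R.continuous))) ?_
      filter_upwards [hμ.ae_norm_eq_one] with v hv using
        mul_inner_sq_le_inner_twoPointGradient_add_reflection hf hδ hv hxz hgap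
    _ = 2 * ∫ v, ⟪twoPointGradient f δ x v, x - z⟫ ∂μ := by
      rw [integral_add (hμ.integrable_of_continuous hcont)
          (hμ.integrable_of_continuous (hcont.comp R.continuous) :
            Integrable (fun v => ⟪twoPointGradient f δ x (R v), x - z⟫) μ),
        hμ.integral_comp_isometry R fun v => ⟪twoPointGradient f δ x v, x - z⟫, two_mul]
  linarith

end IsUniformOnSphere

end Sphere

section Expectation

theorem integrable_comp_of_ae_mem_isCompact {Ω α F : Type*} [MeasurableSpace Ω] {P : Measure Ω}
    [IsFiniteMeasure P] [TopologicalSpace α] [MeasurableSpace α] [OpensMeasurableSpace α]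
    [NormedAddCommGroup F] [MeasurableSpace F] [BorelSpace F] [SecondCountableTopology F]
    {f : α → F} (hf : Continuous f) {X : Ω → α} (hX : AEMeasurable X P) {C : Set α}
    (hC : IsCompact C) (hXC : ∀ᵐ o ∂P, X o ∈ C) :
    Integrable (fun o => f (X o)) P := by
  obtain ⟨c, hc⟩ := hC.exists_bound_of_continuousOn hf.continuousOn
  refine .of_bound (hf.measurable.comp_aemeasurable hX).aestronglyMeasurable c ?_
  filter_upwards [hXC] with o ho using hc _ ho

theorem integral_comp_prodMk_le_of_indepFun {Ω α β : Type*} [MeasurableSpace Ω] {P : Measure Ω}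
    [IsProbabilityMeasure P] [MeasurableSpace α] [MeasurableSpace β] {X : Ω → α} {U : Ω → β}
    (hX : AEMeasurable X P) (hU : AEMeasurable U P) (hXU : X ⟂ᵢ[P] U) {h : α × β → ℝ}
    (hh : Measurable h) (hint : Integrable (fun o => h (X o, U o)) P) {c : ℝ}
    (hc : ∀ o, ∫ b, h (X o, b) ∂P.map U ≤ c) :
    ∫ o, h (X o, U o) ∂P ≤ c := by
  have := Measure.isProbabilityMeasure_map hX
  have := Measure.isProbabilityMeasure_map hU
  have hlaw := (ProbabilityTheory.indepFun_iff_map_prod_eq_prod_map_map hX hU).mp hXU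
  have hXUm : AEMeasurable (fun o => (X o, U o)) P := hX.prodMk hU
  have hint' : Integrable h ((P.map X).prod (P.map U)) := by
    rw [← hlaw]
    exact (integrable_map_measure hh.aestronglyMeasurable hXUm).mpr hint
  have hpartial : Measurable fun a => ∫ b, h (a, b) ∂P.map U :=
    hh.stronglyMeasurable.integral_prod_right'.measurable
  calc ∫ o, h (X o, U o) ∂P = ∫ a, ∫ b, h (a, b) ∂P.map U ∂P.map X := by
        rw [← integral_prod h hint', ← hlaw, integral_map hXUm hh.aestronglyMeasurable]
    _ ≤ ∫ _, c ∂P.map X :=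
        integral_mono_ae hint'.integral_prod_left (integrable_const c)
          ((ae_map_iff hX (measurableSet_le hpartial measurable_const)).mpr (.of_forall hc))
    _ = c := by simp

variable {E : Type*} [NormedAddCommGroup E] [InnerProductSpace ℝ E] [FiniteDimensional ℝ E]
  [MeasurableSpace E] [BorelSpace E] {Ω : Type*} [MeasurableSpace Ω] {P : Measure Ω}
  [IsProbabilityMeasure P] {X U : Ω → E} {f : E → ℝ} {K : Set E} {δ G : ℝ} {z : E}

theorem integrable_linearization_error (hf : Continuous f) (hK : Bornology.IsBounded K)
    (hX : AEMeasurable X P) (hU : AEMeasurable U P) (hXK : ∀ o, X o ∈ K)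
    (hUn : ∀ᵐ o ∂P, ‖U o‖ = 1) (δ : ℝ) (z : E) :
    Integrable (fun o => f (X o) - f z - ⟪twoPointGradient f δ (X o) (U o), X o - z⟫) P := by
  have hcont : Continuous fun p : E × E =>
      f p.1 - f z - ⟪twoPointGradient f δ p.1 p.2, p.1 - z⟫ := by
    have := continuous_twoPointGradient hf δ
    fun_prop
  refine integrable_comp_of_ae_mem_isCompact hcont (hX.prodMk hU)
    (hK.isCompact_closure.prod (isCompact_sphere 0 1)) ?_
  filter_upwards [hUn] with o ho using ⟨subset_closure (hXK o), by simpa using ho⟩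

theorem integral_linearization_error_le (hX : AEMeasurable X P) (hU : AEMeasurable U P)
    (hXU : X ⟂ᵢ[P] U) (hunif : IsUniformOnSphere (P.map U)) (hf : ConvexOn ℝ Set.univ f)
    (hK : Bornology.IsBounded K) (hlip : ∀ x ∈ K, ∀ y ∈ K, |f x - f y| ≤ G * ‖x - y‖)
    (hδ : 0 < δ) (hXK : ∀ o, ∀ v : E, ‖v‖ ≤ 1 → X o + δ • v ∈ K)
    (hzK : ∀ v : E, ‖v‖ ≤ 1 → z + δ • v ∈ K) :
    ∫ o, (f (X o) - f z - ⟪twoPointGradient f δ (X o) (U o), X o - z⟫) ∂P ≤ 2 * δ * G := by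
  have hfc : Continuous f := hf.locallyLipschitz.continuous
  have hcenter {x : E} (hx : ∀ v : E, ‖v‖ ≤ 1 → x + δ • v ∈ K) : x ∈ K := by
    simpa using hx 0 (by simp)
  have hperturb {x v : E} (hx : ∀ v : E, ‖v‖ ≤ 1 → x + δ • v ∈ K) (hv : ‖v‖ = 1) :
      |f (x + δ • v) - f x| ≤ δ * G := by
    have := hlip _ (hx v hv.le) _ (hcenter hx)
    rwa [add_sub_cancel_left, norm_smul, hv, Real.norm_of_nonneg hδ.le, mul_one, mul_comm] at this
  have hUn : ∀ᵐ o ∂P, ‖U o‖ = 1 := ae_of_ae_map hU hunif.ae_norm_eq_one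
  refine integral_comp_prodMk_le_of_indepFun hX hU hXU
    (h := fun p => f p.1 - f z - ⟪twoPointGradient f δ p.1 p.2, p.1 - z⟫) ?_
    (integrable_linearization_error hfc hK hX hU (fun o => hcenter (hXK o)) hUn δ z) fun o => ?_
  · have := continuous_twoPointGradient hfc δ
    fun_prop
  have := hunif.toIsProbabilityMeasure
  have hest := hunif.le_integral_inner_twoPointGradient hf (x := X o) (z := z)
    (gap := f (X o) - f z - 2 * δ * G) hδ fun v hv => by
      linarith [abs_le.mp (hperturb (hXK o) hv), abs_le.mp (hperturb hzK hv)]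
  have hint : Integrable (fun v => ⟪twoPointGradient f δ (X o) v, X o - z⟫) (P.map U) := by
    refine hunif.integrable_of_continuous ?_
    have := continuous_twoPointGradient hfc δ
    fun_prop
  simp only [integral_sub (integrable_const _) hint, integral_const, probReal_univ, one_smul]
  linarith

end Expectation

section SeminormLipschitz

variable {E : Type*} [NormedAddCommGroup E] [InnerProductSpace ℝ E]

/-- `f` is `L`-Lipschitz on `K` with respect to the seminorm `N`, which need not be the norm
carrying the topology of `E`. -/
def SeminormLipschitzOn (N : Seminorm ℝ E) (L : ℝ) (f : E → ℝ) (K : Set E) : Prop :=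
  ∀ x ∈ K, ∀ y ∈ K, |f x - f y| ≤ L * N (x - y)

theorem SeminormLipschitzOn.sub_le {N : Seminorm ℝ E} {L : ℝ} {f : E → ℝ} {K : Set E}
    (hf : SeminormLipschitzOn N L f K) {x y : E} (hx : x ∈ K) (hy : y ∈ K) :
    f x - f y ≤ L * N (x - y) :=
  (le_abs_self _).trans (hf x hx y hy)

theorem SeminormLipschitzOn.inner_add {N : Seminorm ℝ E} {G D : ℝ} {g : E} {r : E → ℝ} {K : Set E}
    (hr : SeminormLipschitzOn N G r K) (hg : ∀ v, |⟪g, v⟫| ≤ D * N v) :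
    SeminormLipschitzOn N (D + G) (fun x => ⟪g, x⟫ + r x) K := fun x hx y hy => calc
  |⟪g, x⟫ + r x - (⟪g, y⟫ + r y)| = |⟪g, x - y⟫ + (r x - r y)| := by
    rw [inner_sub_right]; ring_nf
  _ ≤ |⟪g, x - y⟫| + |r x - r y| := abs_add_le _ _
  _ ≤ D * N (x - y) + G * N (x - y) := add_le_add (hg _) (hr x hx y hy)
  _ = (D + G) * N (x - y) := by ring

end SeminormLipschitz

section MirrorStep

variable {E : Type*} [NormedAddCommGroup E] [InnerProductSpace ℝ E]

/-- The Bregman divergence of the distance-generating function `φ` with gradient `φ'`. -/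
noncomputable def bregmanDiv (φ : E → ℝ) (φ' : E → E) (x y : E) : ℝ :=
  φ x - φ y - ⟪φ' y, x - y⟫

theorem bregmanDiv_self (φ : E → ℝ) (φ' : E → E) (x : E) : bregmanDiv φ φ' x x = 0 := by
  simp [bregmanDiv]

theorem bregmanDiv_eq_add_add_inner (φ : E → ℝ) (φ' : E → E) (z s x : E) :
    bregmanDiv φ φ' z x =
      bregmanDiv φ φ' z s + bregmanDiv φ φ' s x + ⟪φ' s - φ' x, z - s⟫ := by
  simp only [bregmanDiv, inner_sub_left, inner_sub_right]; ring

/-- `y` is a `ρ`-approximate composite mirror descent step from `x` over `C`: it minimises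
`h + (1 / η) V(·, x)` up to an error `ρ`. -/
structure IsApproxProx (φ : E → ℝ) (φ' : E → E) (h : E → ℝ) (η ρ : ℝ) (C : Set E) (x y : E) :
    Prop where
  mem : y ∈ C
  le : ∀ z ∈ C,
    h y + 1 / η * bregmanDiv φ φ' y x ≤ h z + 1 / η * bregmanDiv φ φ' z x + ρ

/-- The distance-generating function `φ`, with gradient `φ'`, of mirror descent on `K` in the
geometry of `N`: `σ` is its modulus of strong convexity and `G` the Lipschitz constant of `φ'`
from `N` to the dual of `N`, the latter expressed through the pairing with an arbitrary vector. -/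
structure IsMirrorMap (N : Seminorm ℝ E) (K : Set E) (φ : E → ℝ) (φ' : E → E)
    (σ G : ℝ) : Prop where
  modulus_pos : 0 < σ
  lipschitz_nonneg : 0 ≤ G
  hasFDerivAt : ∀ x, HasFDerivAt φ (innerSL ℝ (φ' x)) x
  strong_convexity : ∀ x ∈ K, ∀ y ∈ K, σ / 2 * N (x - y) ^ 2 ≤ bregmanDiv φ φ' x y
  lipschitz : ∀ x ∈ K, ∀ y ∈ K, ∀ v, ⟪φ' x - φ' y, v⟫ ≤ G * N (x - y) * N v
  convexOn_right : ∀ a ∈ K, ConvexOn ℝ K (bregmanDiv φ φ' a)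

theorem sub_le_fderiv_of_isMinOn_add {C : Set E} {h ψ : E → ℝ} {ψ' : E →L[ℝ] ℝ} {s z : E}
    (hh : ConvexOn ℝ C h) (hψ : HasFDerivAt ψ ψ' s) (hmin : IsMinOn (fun p => h p + ψ p) C s)
    (hs : s ∈ C) (hz : z ∈ C) : h s - h z ≤ ψ' (z - s) := by
  set q : ℝ → ℝ := fun l => l * (h z - h s) + ψ (s + l • (z - s)) with hq
  have hline : HasDerivAt (fun l : ℝ => s + l • (z - s)) (z - s) 0 := by
    simpa using ((hasDerivAt_id (0 : ℝ)).smul_const (z - s)).const_add s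
  have hderiv : HasDerivAt q (h z - h s + ψ' (z - s)) 0 := by
    have hψs : HasFDerivAt ψ ψ' (s + (0 : ℝ) • (z - s)) := by simpa using hψ
    have hmul : HasDerivAt (fun l : ℝ => l * (h z - h s)) (h z - h s) 0 := by
      simpa using (hasDerivAt_id (0 : ℝ)).mul_const (h z - h s)
    have hcomp : HasDerivAt (ψ ∘ fun l : ℝ => s + l • (z - s)) (ψ' (z - s)) 0 :=
      hψs.comp_hasDerivAt (0 : ℝ) hline
    exact hmul.add hcomp
  have hslope : ∀ᶠ l in nhdsWithin (0 : ℝ) (Set.Ioi 0), 0 ≤ l⁻¹ • (q (0 + l) - q 0) := by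
    filter_upwards [Ioo_mem_nhdsGT (zero_lt_one' ℝ)] with l hl
    have hcomb : (1 - l) • s + l • z = s + l • (z - s) := by module
    have hconv := hh.2 hs hz (sub_nonneg.mpr hl.2.le) hl.1.le (by ring)
    have hle : h s + ψ s ≤ h (s + l • (z - s)) + ψ (s + l • (z - s)) :=
      hmin (hh.1.add_smul_sub_mem hs hz ⟨hl.1.le, hl.2.le⟩)
    rw [hcomb, smul_eq_mul, smul_eq_mul] at hconv
    refine smul_nonneg (inv_nonneg.mpr hl.1.le) ?_
    simp only [hq, zero_add, zero_mul, zero_smul, add_zero]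
    linarith
  linarith [ge_of_tendsto hderiv.tendsto_slope_zero_right hslope]

namespace IsApproxProx

variable {φ : E → ℝ} {φ' : E → E} {h : E → ℝ} {η ρ : ℝ} {C : Set E} {x y s z : E}

theorem closure (hy : IsApproxProx φ φ' h η ρ C x y) (hh : Continuous h) (hφ : Continuous φ) :
    IsApproxProx φ φ' h η ρ (closure C) x y where
  mem := subset_closure hy.mem
  le := by
    have hcont : Continuous fun z => h z + 1 / η * bregmanDiv φ φ' z x + ρ := by
      unfold bregmanDiv; fun_prop
    exact closure_minimal hy.le (isClosed_le continuous_const hcont)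

theorem three_point (hs : IsApproxProx φ φ' h η 0 C x s) (hh : ConvexOn ℝ C h)
    (hφ : HasFDerivAt φ (innerSL ℝ (φ' s)) s) (hz : z ∈ C) :
    h s + 1 / η * bregmanDiv φ φ' s x + 1 / η * bregmanDiv φ φ' z s ≤
      h z + 1 / η * bregmanDiv φ φ' z x := by
  have hderiv : HasFDerivAt (fun p => 1 / η * bregmanDiv φ φ' p x)
      ((1 / η) • (innerSL ℝ (φ' s) - innerSL ℝ (φ' x))) s :=
    ((hφ.sub_const (φ x)).sub
      ((innerSL ℝ (φ' x)).hasFDerivAt.comp s (hasFDerivAt_sub_const x))).const_mul (1 / η)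
  have hopt := sub_le_fderiv_of_isMinOn_add hh hderiv
    (fun p hp => by simpa using hs.le p hp) hs.mem hz
  simp only [smul_apply, sub_apply, innerSL_apply_apply,
    ← inner_sub_left, smul_eq_mul] at hopt
  rw [bregmanDiv_eq_add_add_inner φ φ' z s x]
  linarith

end IsApproxProx

theorem exists_isApproxProx_zero {φ : E → ℝ} {φ' : E → E} {h : E → ℝ} {C : Set E}
    (hC : IsCompact C) (hne : C.Nonempty) (hh : Continuous h) (hφ : Continuous φ) (η : ℝ) (x : E) :
    ∃ s, IsApproxProx φ φ' h η 0 C x s := by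
  have hcont : Continuous fun z => h z + 1 / η * bregmanDiv φ φ' z x := by
    unfold bregmanDiv; fun_prop
  obtain ⟨s, hs, hmin⟩ := hC.exists_isMinOn hne hcont.continuousOn
  exact ⟨s, hs, fun z hz => by simpa using hmin hz⟩

namespace IsMirrorMap

variable {N : Seminorm ℝ E} {K C : Set E} {φ : E → ℝ} {φ' : E → E} {σ G : ℝ}
  {h : E → ℝ} {η ρ L : ℝ} {x y s z : E}

theorem continuous (hφ : IsMirrorMap N K φ φ' σ G) : Continuous φ :=
  continuous_iff_continuousAt.mpr fun x => (hφ.hasFDerivAt x).continuousAt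

theorem bregmanDiv_nonneg (hφ : IsMirrorMap N K φ φ' σ G) (hx : x ∈ K) (hy : y ∈ K) :
    0 ≤ bregmanDiv φ φ' x y :=
  (mul_nonneg (half_pos hφ.modulus_pos).le (sq_nonneg _)).trans (hφ.strong_convexity x hx y hy)

theorem bregmanDiv_le_of_approx (hφ : IsMirrorMap N K φ φ' σ G) (hη : 0 < η) (hh : ConvexOn ℝ C h)
    (hy : IsApproxProx φ φ' h η ρ C x y) (hs : IsApproxProx φ φ' h η 0 C x s) :
    bregmanDiv φ φ' y s ≤ η * ρ := by
  have hthree := hs.three_point hh (hφ.hasFDerivAt s) hy.mem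
  rw [← div_le_iff₀' hη, ← one_div_mul_eq_div]
  linarith [hy.le s hs.mem]

theorem seminorm_approx_sub_exact_le (hφ : IsMirrorMap N K φ φ' σ G) (hη : 0 < η)
    (hh : ConvexOn ℝ C h) (hCK : C ⊆ K) (hy : IsApproxProx φ φ' h η ρ C x y)
    (hs : IsApproxProx φ φ' h η 0 C x s) : N (y - s) ≤ √(2 / σ) * √(η * ρ) := by
  have hσ := hφ.modulus_pos
  have hstrong := (hφ.strong_convexity y (hCK hy.mem) s (hCK hs.mem)).trans
    (hφ.bregmanDiv_le_of_approx hη hh hy hs)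
  rw [← Real.sqrt_mul (by positivity)]
  refine Real.le_sqrt_of_sq_le ?_
  calc N (y - s) ^ 2 = 2 / σ * (σ / 2 * N (y - s) ^ 2) := by field_simp
    _ ≤ 2 / σ * (η * ρ) := by gcongr

theorem seminorm_exact_sub_le (hφ : IsMirrorMap N K φ φ' σ G) (hη : 0 < η) (hh : ConvexOn ℝ C h)
    (hL : 0 ≤ L) (hlip : SeminormLipschitzOn N L h K) (hCK : C ⊆ K) (hx : x ∈ C)
    (hs : IsApproxProx φ φ' h η 0 C x s) : N (s - x) ≤ η * L / σ := by
  have hσ := hφ.modulus_pos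
  have hthree := hs.three_point hh (hφ.hasFDerivAt s) hx
  rw [bregmanDiv_self, mul_zero, add_zero] at hthree
  have hV := hφ.strong_convexity s (hCK hs.mem) x (hCK hx)
  have hV' := hφ.strong_convexity x (hCK hx) s (hCK hs.mem)
  have hdescent := hlip.sub_le (hCK hx) (hCK hs.mem)
  rw [map_sub_rev] at hV' hdescent
  have hsq : 1 / η * (σ * N (s - x) ^ 2) ≤ L * N (s - x) := calc
    1 / η * (σ * N (s - x) ^ 2)
        ≤ 1 / η * (bregmanDiv φ φ' s x + bregmanDiv φ φ' x s) := by gcongr; linarith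
    _ ≤ L * N (s - x) := by linarith
  rw [one_div_mul_eq_div, div_le_iff₀ hη] at hsq
  rw [le_div_iff₀ hσ]
  rcases (apply_nonneg N (s - x)).eq_or_lt with h0 | hpos
  · rw [← h0]; simp only [zero_mul]; positivity
  · nlinarith

theorem seminorm_approx_sub_le [FiniteDimensional ℝ E] (hφ : IsMirrorMap N K φ φ' σ G) (hη : 0 < η)
    (hh : ConvexOn ℝ Set.univ h) (hL : 0 ≤ L) (hlip : SeminormLipschitzOn N L h K)
    (hC : IsCompact C) (hCconv : Convex ℝ C) (hCK : C ⊆ K) (hx : x ∈ C)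
    (hy : IsApproxProx φ φ' h η ρ C x y) :
    N (y - x) ≤ √(2 / σ) * √(η * ρ) + η * L / σ := by
  have hhC : ConvexOn ℝ C h := hh.subset (Set.subset_univ C) hCconv
  obtain ⟨s, hs⟩ := exists_isApproxProx_zero (φ' := φ') hC ⟨x, hx⟩ hh.locallyLipschitz.continuous
    hφ.continuous η x
  calc N (y - x) ≤ N (y - s) + N (s - x) := by
        simpa using map_add_le_add N (y - s) (s - x)
    _ ≤ _ := add_le_add (hφ.seminorm_approx_sub_exact_le hη hhC hCK hy hs)
        (hφ.seminorm_exact_sub_le hη hhC hL hlip hCK hx hs)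

theorem bregmanDiv_sub_bregmanDiv_le (hφ : IsMirrorMap N K φ φ' σ G) (hy : y ∈ K) (hs : s ∈ K)
    (z : E) :
    bregmanDiv φ φ' z y - bregmanDiv φ φ' z s ≤ G * N (y - s) * N (z - y) := by
  have hnonneg := hφ.bregmanDiv_nonneg hy hs
  have hpair := hφ.lipschitz s hs y hy (z - y)
  rw [map_sub_rev N s y] at hpair
  have hid := bregmanDiv_eq_add_add_inner φ φ' z y s
  rw [← neg_sub (φ' s), inner_neg_left] at hid
  linarith

theorem sub_le_bregmanDiv_sub [FiniteDimensional ℝ E] (hφ : IsMirrorMap N K φ φ' σ G) (hη : 0 < η)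
    (hh : ConvexOn ℝ Set.univ h) (hlip : SeminormLipschitzOn N L h K)
    (hC : IsCompact C) (hCconv : Convex ℝ C) (hCK : C ⊆ K) {Δ : ℝ}
    (hΔ : ∀ a ∈ C, ∀ b ∈ C, N (a - b) ≤ Δ) (hx : x ∈ C) (hz : z ∈ C)
    (hy : IsApproxProx φ φ' h η ρ C x y) :
    h x - h z ≤ 1 / η * (bregmanDiv φ φ' z x - bregmanDiv φ φ' z y) + η * L ^ 2 / (2 * σ) +
      Δ * G * √(2 / σ) * √(ρ / η) := by
  have hσ := hφ.modulus_pos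
  have hG := hφ.lipschitz_nonneg
  have hhC : ConvexOn ℝ C h := hh.subset (Set.subset_univ C) hCconv
  obtain ⟨s, hs⟩ := exists_isApproxProx_zero (φ' := φ') hC ⟨x, hx⟩ hh.locallyLipschitz.continuous
    hφ.continuous η x
  have hthree := hs.three_point hhC (hφ.hasFDerivAt s) hz
  have hstrong : 1 / η * (σ / 2 * N (x - s) ^ 2) ≤ 1 / η * bregmanDiv φ φ' s x := by
    rw [map_sub_rev]
    gcongr
    exact hφ.strong_convexity s (hCK hs.mem) x (hCK hx)
  have hyoung : L * N (x - s) ≤ η * L ^ 2 / (2 * σ) + 1 / η * (σ / 2 * N (x - s) ^ 2) := by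
    rw [← sub_nonneg]
    calc 0 ≤ (η * L - σ * N (x - s)) ^ 2 / (2 * σ * η) := by positivity
      _ = _ := by field_simp; ring
  have hinexact : 1 / η * (bregmanDiv φ φ' z y - bregmanDiv φ φ' z s) ≤
      Δ * G * √(2 / σ) * √(ρ / η) := calc
    _ ≤ 1 / η * (G * (√(2 / σ) * √(η * ρ)) * Δ) := by
      refine mul_le_mul_of_nonneg_left ?_ (by positivity)
      refine (hφ.bregmanDiv_sub_bregmanDiv_le (hCK hy.mem) (hCK hs.mem) z).trans ?_
      gcongr
      · exact hφ.seminorm_approx_sub_exact_le hη hhC hCK hy hs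
      · exact hΔ z hz y hy.mem
    _ = Δ * G * √(2 / σ) * (√(η * ρ) / η) := by ring
    _ = Δ * G * √(2 / σ) * √(ρ / η) := by
      have hscale : √(ρ / η) = √(η * ρ) / η := by
        rw [show ρ / η = η * ρ / η ^ 2 by field_simp, Real.sqrt_div' _ (sq_nonneg η),
          Real.sqrt_sq hη.le]
      rw [hscale]
  have hmove := hlip.sub_le (hCK hx) (hCK hs.mem)
  linarith

end IsMirrorMap

end MirrorStep

section Network

theorem backProd_succ {m : ℕ} (W : ℕ → Matrix (Fin m) (Fin m) ℝ) {t τ : ℕ} (h : τ ≤ t + 1) :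
    backProd W (t + 1) τ = W (t + 1) * backProd W t τ := by
  rw [backProd, backProd, show t + 1 + 1 - τ = (t + 1 - τ) + 1 by omega, List.range_succ_eq_map,
    List.map_cons, List.prod_cons, List.map_map]
  simp [Function.comp_def]

theorem backProd_self_add_one {m : ℕ} (W : ℕ → Matrix (Fin m) (Fin m) ℝ) (t : ℕ) :
    backProd W t (t + 1) = 1 := by
  simp [backProd]

/-- The communication matrices `W 1, …, W T` are doubly stochastic and their backward products
approach the averaging matrix `1 / m` at the geometric rate `κ`, with prefactor `θ`. -/
structure IsGeometricallyMixing {m : ℕ} (W : ℕ → Matrix (Fin m) (Fin m) ℝ) (T : ℕ) (θ κ : ℝ) :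
    Prop where
  doublyStochastic : ∀ t ∈ Finset.Icc 1 T, W t ∈ doublyStochastic ℝ (Fin m)
  mixing : ∀ τ t : ℕ, 1 ≤ τ → τ ≤ t → t ≤ T → ∀ i,
    ∑ j, |backProd W t τ i j - 1 / (m : ℝ)| ≤ θ * κ ^ (t - τ)
  prefactor_nonneg : 0 ≤ θ
  rate_nonneg : 0 ≤ κ
  rate_lt_one : κ < 1

theorem sum_sum_pow_mul_le {κ : ℝ} (h0 : 0 ≤ κ) (h1 : κ < 1) {ε : ℕ → ℝ} (hε : ∀ t, 0 ≤ ε t)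
    (n : ℕ) :
    ∑ t ∈ Finset.Icc 1 n, ∑ τ ∈ Finset.Icc 1 t, κ ^ (t - τ) * ε τ ≤
      (∑ τ ∈ Finset.Icc 1 n, ε τ) / (1 - κ) := by
  have hgeom (τ : ℕ) : ∑ t ∈ Finset.Icc τ n, κ ^ (t - τ) ≤ 1 / (1 - κ) := by
    rw [← Finset.Ico_add_one_right_eq_Icc, Finset.sum_Ico_eq_sum_range, Finset.range_eq_Ico]
    simp only [add_tsub_cancel_left]
    exact (geom_sum_Ico_le_of_lt_one h0 h1).trans_eq (by rw [pow_zero])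
  calc ∑ t ∈ Finset.Icc 1 n, ∑ τ ∈ Finset.Icc 1 t, κ ^ (t - τ) * ε τ
      = ∑ τ ∈ Finset.Icc 1 n, (∑ t ∈ Finset.Icc τ n, κ ^ (t - τ)) * ε τ := by
        simp only [Finset.sum_mul]
        exact Finset.sum_comm' fun t τ => by simp only [Finset.mem_Icc]; omega
    _ ≤ ∑ τ ∈ Finset.Icc 1 n, 1 / (1 - κ) * ε τ :=
        Finset.sum_le_sum fun τ _ => mul_le_mul_of_nonneg_right (hgeom τ) (hε τ)
    _ = (∑ τ ∈ Finset.Icc 1 n, ε τ) / (1 - κ) := by rw [← Finset.mul_sum, one_div_mul_eq_div]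

theorem sum_map_sum_smul_le_of_mem_doublyStochastic {ι E : Type*} [Fintype ι] [DecidableEq ι]
    [AddCommGroup E] [Module ℝ E] {M : Matrix ι ι ℝ} (hM : M ∈ doublyStochastic ℝ ι) {K : Set E}
    {f : E → ℝ} (hf : ConvexOn ℝ K f) {v : ι → E} (hv : ∀ k, v k ∈ K) :
    ∑ i, f (∑ k, M i k • v k) ≤ ∑ k, f (v k) := calc
  ∑ i, f (∑ k, M i k • v k) ≤ ∑ i, ∑ k, M i k * f (v k) :=
    Finset.sum_le_sum fun i _ => hf.map_sum_le
      (fun k _ => nonneg_of_mem_doublyStochastic hM)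
      (sum_row_of_mem_doublyStochastic hM i) fun k _ => hv k
  _ = ∑ k, f (v k) := by
    rw [Finset.sum_comm]
    simp only [← Finset.sum_mul, sum_col_of_mem_doublyStochastic hM, one_mul]

variable {E : Type*} [AddCommGroup E] [Module ℝ E] {m : ℕ} {W : ℕ → Matrix (Fin m) (Fin m) ℝ}
  {T : ℕ}

theorem seminorm_sum_smul_le (N : Seminorm ℝ E) {ι : Type*} (s : Finset ι) (a : ι → ℝ) {v : ι → E}
    {ε : ℝ} (hv : ∀ k ∈ s, N (v k) ≤ ε) : N (∑ k ∈ s, a k • v k) ≤ (∑ k ∈ s, |a k|) * ε := calc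
  N (∑ k ∈ s, a k • v k) ≤ ∑ k ∈ s, N (a k • v k) :=
    Finset.le_sum_of_subadditive N (map_zero N).le (map_add_le_add N) s _
  _ ≤ ∑ k ∈ s, |a k| * ε := Finset.sum_le_sum fun k hk => by
    rw [map_smul_eq_mul, Real.norm_eq_abs]; gcongr; exact hv k hk
  _ = (∑ k ∈ s, |a k|) * ε := by rw [Finset.sum_mul]

theorem iterate_eq_add_sum_backProd {x y : ℕ → Fin m → E} {x0 : E}
    (hW : ∀ t ∈ Finset.Icc 1 T, ∀ i, ∑ j, W t i j = 1) (hinit : ∀ i, x 1 i = x0)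
    (hupdate : ∀ t ∈ Finset.Icc 1 T, ∀ i, x (t + 1) i = ∑ j, W t i j • y t j) {t : ℕ}
    (ht : t ≤ T) (i : Fin m) :
    x (t + 1) i = x0 + ∑ τ ∈ Finset.Icc 1 t, ∑ k, backProd W t τ i k • (y τ k - x τ k) := by
  induction t generalizing i with
  | zero => simp [hinit]
  | succ t ih =>
    have hmem : t + 1 ∈ Finset.Icc 1 T := Finset.mem_Icc.mpr ⟨by omega, ht⟩
    have hpast (τ) (hτ : τ ∈ Finset.Icc 1 t) : ∑ k, backProd W (t + 1) τ i k • (y τ k - x τ k) =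
        ∑ j, W (t + 1) i j • ∑ k, backProd W t τ j k • (y τ k - x τ k) := by
      rw [backProd_succ W (by linarith [(Finset.mem_Icc.mp hτ).2])]
      simp only [Matrix.mul_apply, Finset.sum_smul, Finset.smul_sum, smul_smul]
      exact Finset.sum_comm
    calc x (t + 1 + 1) i
        = ∑ j, W (t + 1) i j • (x (t + 1) j + (y (t + 1) j - x (t + 1) j)) := by
          simp only [hupdate (t + 1) hmem i, add_sub_cancel]
      _ = x0 + (∑ τ ∈ Finset.Icc 1 t, ∑ j, W (t + 1) i j •
            ∑ k, backProd W t τ j k • (y τ k - x τ k)) +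
          ∑ j, W (t + 1) i j • (y (t + 1) j - x (t + 1) j) := by
          rw [Finset.sum_comm]
          simp only [← Finset.smul_sum, smul_add, Finset.sum_add_distrib, ih (by omega),
            ← Finset.sum_smul, hW _ hmem i, one_smul]
      _ = _ := by
          rw [Finset.sum_Icc_succ_top (by omega), Finset.sum_congr rfl hpast,
            backProd_succ W le_rfl, backProd_self_add_one, mul_one, add_assoc]

theorem IsGeometricallyMixing.sum_abs_sub_le {θ κ : ℝ} (hP : IsGeometricallyMixing W T θ κ)
    {t τ : ℕ} (h1 : 1 ≤ τ) (hτt : τ ≤ t) (htT : t ≤ T) (i j : Fin m) :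
    ∑ k, |backProd W t τ j k - backProd W t τ i k| ≤ 2 * θ * κ ^ (t - τ) := calc
  _ ≤ ∑ k, (|backProd W t τ j k - 1 / (m : ℝ)| + |backProd W t τ i k - 1 / (m : ℝ)|) :=
    Finset.sum_le_sum fun k _ => by
      rw [abs_sub_comm (backProd W t τ i k)]
      exact abs_sub_le _ _ _
  _ ≤ θ * κ ^ (t - τ) + θ * κ ^ (t - τ) := by
    rw [Finset.sum_add_distrib]
    exact add_le_add (hP.mixing τ t h1 hτt htT j) (hP.mixing τ t h1 hτt htT i)
  _ = 2 * θ * κ ^ (t - τ) := by ring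

theorem IsGeometricallyMixing.sum_seminorm_sub_le {θ κ : ℝ} (hP : IsGeometricallyMixing W T θ κ)
    (N : Seminorm ℝ E) {x y : ℕ → Fin m → E} {x0 : E} (hinit : ∀ i, x 1 i = x0)
    (hupdate : ∀ t ∈ Finset.Icc 1 T, ∀ i, x (t + 1) i = ∑ j, W t i j • y t j)
    {ε : ℕ → ℝ} (hε0 : ∀ t, 0 ≤ ε t) (hε : ∀ t ∈ Finset.Icc 1 T, ∀ i, N (y t i - x t i) ≤ ε t)
    (i j : Fin m) :
    ∑ t ∈ Finset.Icc 1 T, N (x t j - x t i) ≤ 2 * θ / (1 - κ) * ∑ t ∈ Finset.Icc 1 T, ε t := by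
  have hθ := hP.prefactor_nonneg
  have hrep {t : ℕ} (ht : t ≤ T) := iterate_eq_add_sum_backProd
    (fun s hs => sum_row_of_mem_doublyStochastic (hP.doublyStochastic s hs)) hinit hupdate ht
  have hround (t) (ht : t ∈ Finset.Icc 1 T) : N (x (t + 1) j - x (t + 1) i) ≤
      2 * θ * ∑ τ ∈ Finset.Icc 1 t, κ ^ (t - τ) * ε τ := by
    have htT := (Finset.mem_Icc.mp ht).2
    simp only [hrep htT, add_sub_add_left_eq_sub, ← Finset.sum_sub_distrib, ← sub_smul,
      Finset.mul_sum]
    refine (Finset.le_sum_of_subadditive N (map_zero N).le (map_add_le_add N) _ _).trans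
      (Finset.sum_le_sum fun τ hτ => ?_)
    obtain ⟨h1, hτt⟩ := Finset.mem_Icc.mp hτ
    calc _ ≤ (∑ k, |backProd W t τ j k - backProd W t τ i k|) * ε τ :=
          seminorm_sum_smul_le N _ _ fun k _ => hε τ (Finset.mem_Icc.mpr ⟨h1, hτt.trans htT⟩) k
      _ ≤ 2 * θ * κ ^ (t - τ) * ε τ :=
          mul_le_mul_of_nonneg_right (hP.sum_abs_sub_le h1 hτt htT i j) (hε0 τ)
      _ = _ := by ring
  have hshift : ∑ t ∈ Finset.Icc 1 T, N (x t j - x t i) ≤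
      ∑ t ∈ Finset.Icc 1 T, N (x (t + 1) j - x (t + 1) i) := by
    rw [← sub_nonneg, ← Finset.sum_sub_distrib, ← Finset.Ico_add_one_right_eq_Icc,
      Finset.sum_Ico_sub (fun t => N (x t j - x t i)) (by omega)]
    simp [hinit]
  calc _ ≤ ∑ t ∈ Finset.Icc 1 T, 2 * θ * ∑ τ ∈ Finset.Icc 1 t, κ ^ (t - τ) * ε τ :=
        hshift.trans (Finset.sum_le_sum hround)
    _ ≤ 2 * θ * ((∑ t ∈ Finset.Icc 1 T, ε t) / (1 - κ)) := by
        rw [← Finset.mul_sum]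
        gcongr
        exact sum_sum_pow_mul_le hP.rate_nonneg hP.rate_lt_one hε0 T
    _ = _ := by ring

end Network

section MirrorDescentRun

variable {E : Type*} [NormedAddCommGroup E] [InnerProductSpace ℝ E] {m T : ℕ}

/-- A run of distributed composite mirror descent with regularizer `r` over `T` rounds: from its
iterate `x t i`, node `i` takes a `ρ t`-approximate step `y t i` over `C` for the linearized loss
with slope `g t i`, and the next iterates are the `W t`-averages of these steps. -/
structure IsMirrorDescentRun (W : ℕ → Matrix (Fin m) (Fin m) ℝ) (T : ℕ) (φ : E → ℝ) (φ' : E → E)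
    (r : E → ℝ) (η : ℝ) (ρ : ℕ → ℝ) (C : Set E) (x0 : E) (g x y : ℕ → Fin m → E) : Prop where
  init_mem : x0 ∈ C
  init : ∀ i, x 1 i = x0
  step : ∀ t ∈ Finset.Icc 1 T, ∀ i,
    IsApproxProx φ φ' (fun z => ⟪g t i, z⟫ + r z) η (ρ t) C (x t i) (y t i)
  update : ∀ t ∈ Finset.Icc 1 T, ∀ i, x (t + 1) i = ∑ j, W t i j • y t j

namespace IsMirrorDescentRun

variable {W : ℕ → Matrix (Fin m) (Fin m) ℝ} {φ : E → ℝ} {φ' : E → E} {r : E → ℝ} {η : ℝ}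
  {ρ : ℕ → ℝ} {C : Set E} {x0 : E} {g x y : ℕ → Fin m → E}

theorem closure (hrun : IsMirrorDescentRun W T φ φ' r η ρ C x0 g x y) (hr : Continuous r)
    (hφ : Continuous φ) : IsMirrorDescentRun W T φ φ' r η ρ (closure C) x0 g x y where
  init_mem := subset_closure hrun.init_mem
  init := hrun.init
  step t ht i := (hrun.step t ht i).closure (by fun_prop) hφ
  update := hrun.update

theorem mem_add_one (hrun : IsMirrorDescentRun W T φ φ' r η ρ C x0 g x y) (hC : Convex ℝ C)
    (hW : ∀ t ∈ Finset.Icc 1 T, W t ∈ doublyStochastic ℝ (Fin m)) {t : ℕ} (ht : t ≤ T)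
    (i : Fin m) : x (t + 1) i ∈ C := by
  rcases t.eq_zero_or_pos with rfl | hpos
  · exact hrun.init i ▸ hrun.init_mem
  · have htT : t ∈ Finset.Icc 1 T := Finset.mem_Icc.mpr ⟨hpos, ht⟩
    rw [hrun.update t htT]
    exact hC.sum_mem (fun _ _ => nonneg_of_mem_doublyStochastic (hW t htT))
      (sum_row_of_mem_doublyStochastic (hW t htT) i) fun k _ => (hrun.step t htT k).mem

theorem mem (hrun : IsMirrorDescentRun W T φ φ' r η ρ C x0 g x y) (hC : Convex ℝ C)
    (hW : ∀ t ∈ Finset.Icc 1 T, W t ∈ doublyStochastic ℝ (Fin m)) {t : ℕ}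
    (ht : t ∈ Finset.Icc 1 T) (i : Fin m) : x t i ∈ C := by
  obtain ⟨h1, hT⟩ := Finset.mem_Icc.mp ht
  obtain ⟨s, rfl⟩ := Nat.exists_eq_add_of_le' h1
  exact hrun.mem_add_one hC hW (by omega) i

theorem sum_sub_le (hrun : IsMirrorDescentRun W T φ φ' r η ρ C x0 g x y)
    (hW : ∀ t ∈ Finset.Icc 1 T, W t ∈ doublyStochastic ℝ (Fin m)) {f : E → ℝ}
    (hf : ConvexOn ℝ C f) :
    ∑ t ∈ Finset.Icc 1 T, ∑ i, (f (x t i) - f (y t i)) ≤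
      m * f x0 - ∑ i, f (x (T + 1) i) := by
  have hround (t) (ht : t ∈ Finset.Icc 1 T) :
      ∑ i, (f (x t i) - f (y t i)) ≤ ∑ i, f (x t i) - ∑ i, f (x (t + 1) i) := by
    rw [Finset.sum_sub_distrib]
    simp only [hrun.update t ht]
    exact sub_le_sub_left (sum_map_sum_smul_le_of_mem_doublyStochastic (hW t ht) hf
      fun k => (hrun.step t ht k).mem) _
  have htel : ∑ t ∈ Finset.Icc 1 T, (∑ i, f (x t i) - ∑ i, f (x (t + 1) i)) =
      ∑ i, f (x 1 i) - ∑ i, f (x (T + 1) i) := by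
    rw [← neg_inj, ← Finset.sum_neg_distrib, ← Finset.Ico_add_one_right_eq_Icc]
    simp only [neg_sub]
    exact Finset.sum_Ico_sub (fun t => ∑ i, f (x t i)) (by omega)
  refine (Finset.sum_le_sum hround).trans_eq (htel.trans ?_)
  simp [hrun.init]

variable [FiniteDimensional ℝ E] {N : Seminorm ℝ E} {K : Set E} {σ G D Gr : ℝ}

theorem sum_linearized_regret_le (hrun : IsMirrorDescentRun W T φ φ' r η ρ C x0 g x y)
    (hφ : IsMirrorMap N K φ φ' σ G) (hη : 0 < η) (hr : ConvexOn ℝ Set.univ r)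
    (hrlip : SeminormLipschitzOn N Gr r K)
    (hg : ∀ t ∈ Finset.Icc 1 T, ∀ i v, |⟪g t i, v⟫| ≤ D * N v)
    (hW : ∀ t ∈ Finset.Icc 1 T, W t ∈ doublyStochastic ℝ (Fin m))
    (hC : IsCompact C) (hCconv : Convex ℝ C) (hCK : C ⊆ K) {Δ : ℝ}
    (hΔ : ∀ a ∈ C, ∀ b ∈ C, N (a - b) ≤ Δ) {z : E} (hz : z ∈ C) :
    ∑ t ∈ Finset.Icc 1 T, ∑ i, (⟪g t i, x t i - z⟫ + r (x t i) - r z) ≤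
      m * (bregmanDiv φ φ' z x0 / η + T * (η * (D + Gr) ^ 2 / (2 * σ)) +
        Δ * G * √(2 / σ) * ∑ t ∈ Finset.Icc 1 T, √(ρ t / η)) := by
  have hround (t) (ht : t ∈ Finset.Icc 1 T) (i : Fin m) :
      ⟪g t i, x t i - z⟫ + r (x t i) - r z ≤
        1 / η * (bregmanDiv φ φ' z (x t i) - bregmanDiv φ φ' z (y t i)) +
          (η * (D + Gr) ^ 2 / (2 * σ) + Δ * G * √(2 / σ) * √(ρ t / η)) := by
    have hstep := hφ.sub_le_bregmanDiv_sub hη (((innerSL ℝ (g t i)).toLinearMap.convexOn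
      convex_univ).add hr) (hrlip.inner_add (hg t ht i)) hC hCconv hCK hΔ
      (hrun.mem hCconv hW ht i) hz (hrun.step t ht i)
    simp only [Pi.add_apply, ContinuousLinearMap.coe_coe, innerSL_apply_apply] at hstep
    rw [inner_sub_right]
    linarith
  have hnonneg : 0 ≤ ∑ i, bregmanDiv φ φ' z (x (T + 1) i) :=
    Finset.sum_nonneg fun i _ => hφ.bregmanDiv_nonneg (hCK hz)
      (hCK (hrun.mem_add_one hCconv hW le_rfl i))
  have htel := hrun.sum_sub_le hW ((hφ.convexOn_right z (hCK hz)).subset hCK hCconv)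
  calc _ ≤ ∑ t ∈ Finset.Icc 1 T, ∑ i,
          (1 / η * (bregmanDiv φ φ' z (x t i) - bregmanDiv φ φ' z (y t i)) +
            (η * (D + Gr) ^ 2 / (2 * σ) + Δ * G * √(2 / σ) * √(ρ t / η))) :=
        Finset.sum_le_sum fun t ht => Finset.sum_le_sum fun i _ => hround t ht i
    _ = 1 / η * ∑ t ∈ Finset.Icc 1 T, ∑ i,
          (bregmanDiv φ φ' z (x t i) - bregmanDiv φ φ' z (y t i)) +
        m * (T * (η * (D + Gr) ^ 2 / (2 * σ)) +
          Δ * G * √(2 / σ) * ∑ t ∈ Finset.Icc 1 T, √(ρ t / η)) := by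
        simp only [Finset.sum_add_distrib, ← Finset.mul_sum, Finset.sum_const, Finset.card_univ,
          Fintype.card_fin, nsmul_eq_mul, Nat.card_Icc, Nat.add_sub_cancel]
        ring
    _ ≤ 1 / η * (m * bregmanDiv φ φ' z x0) + m * (T * (η * (D + Gr) ^ 2 / (2 * σ)) +
          Δ * G * √(2 / σ) * ∑ t ∈ Finset.Icc 1 T, √(ρ t / η)) := by
        gcongr
        linarith
    _ = _ := by ring

theorem sum_disagreement_le (hrun : IsMirrorDescentRun W T φ φ' r η ρ C x0 g x y)
    (hφ : IsMirrorMap N K φ φ' σ G) (hη : 0 < η) (hr : ConvexOn ℝ Set.univ r)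
    (hrlip : SeminormLipschitzOn N Gr r K)
    (hg : ∀ t ∈ Finset.Icc 1 T, ∀ i v, |⟪g t i, v⟫| ≤ D * N v) (hD : 0 ≤ D + Gr) {θ κ : ℝ}
    (hW : IsGeometricallyMixing W T θ κ) (hC : IsCompact C) (hCconv : Convex ℝ C) (hCK : C ⊆ K)
    (j : Fin m) :
    ∑ t ∈ Finset.Icc 1 T, ∑ i, N (x t j - x t i) ≤ m * (2 * θ / (1 - κ) *
      (√(2 / σ) * ∑ t ∈ Finset.Icc 1 T, √(η * ρ t) + T * (η * (D + Gr) / σ))) := by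
  have hσ := hφ.modulus_pos
  have hstep (t) (ht : t ∈ Finset.Icc 1 T) (i : Fin m) :
      N (y t i - x t i) ≤ √(2 / σ) * √(η * ρ t) + η * (D + Gr) / σ :=
    hφ.seminorm_approx_sub_le hη (((innerSL ℝ (g t i)).toLinearMap.convexOn convex_univ).add hr)
      hD (hrlip.inner_add (hg t ht i)) hC hCconv hCK
      (hrun.mem hCconv hW.doublyStochastic ht i) (hrun.step t ht i)
  rw [Finset.sum_comm]
  calc _ ≤ ∑ _i : Fin m, 2 * θ / (1 - κ) *
          ∑ t ∈ Finset.Icc 1 T, (√(2 / σ) * √(η * ρ t) + η * (D + Gr) / σ) :=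
        Finset.sum_le_sum fun i _ => hW.sum_seminorm_sub_le N hrun.init hrun.update
          (fun t => by positivity) hstep i j
    _ = _ := by
        simp [Finset.sum_add_distrib, Finset.mul_sum]

theorem sum_regret_le (hrun : IsMirrorDescentRun W T φ φ' r η ρ C x0 g x y)
    (hφ : IsMirrorMap N K φ φ' σ G) (hη : 0 < η) (hr : ConvexOn ℝ Set.univ r)
    (hrlip : SeminormLipschitzOn N Gr r K)
    (hg : ∀ t ∈ Finset.Icc 1 T, ∀ i v, |⟪g t i, v⟫| ≤ D * N v) (hD : 0 ≤ D + Gr) {θ κ : ℝ}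
    (hW : IsGeometricallyMixing W T θ κ) (hC : IsCompact C) (hCconv : Convex ℝ C) (hCK : C ⊆ K)
    {Δ : ℝ} (hΔ : ∀ a ∈ C, ∀ b ∈ C, N (a - b) ≤ Δ) {ℓ : ℕ → Fin m → E → ℝ} {Gℓ : ℝ}
    (hℓlip : ∀ t ∈ Finset.Icc 1 T, ∀ i, SeminormLipschitzOn N Gℓ (ℓ t i) K) (hG : 0 ≤ Gℓ + Gr)
    {z w : E} (hz : z ∈ C) (hw : w ∈ K) {Λ : ℝ} (hΛ : N (z - w) ≤ Λ) (j : Fin m) :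
    ∑ t ∈ Finset.Icc 1 T, ∑ i, (ℓ t i (x t j) + r (x t j) - ℓ t i w - r w) ≤
      ∑ t ∈ Finset.Icc 1 T, ∑ i, (ℓ t i (x t i) - ℓ t i z - ⟪g t i, x t i - z⟫) +
      m * (bregmanDiv φ φ' z x0 / η + T * (η * (D + Gr) ^ 2 / (2 * σ)) +
        Δ * G * √(2 / σ) * ∑ t ∈ Finset.Icc 1 T, √(ρ t / η)) +
      (Gℓ + Gr) * (m * (2 * θ / (1 - κ) *
        (√(2 / σ) * ∑ t ∈ Finset.Icc 1 T, √(η * ρ t) + T * (η * (D + Gr) / σ)))) +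
      T * (m * ((Gℓ + Gr) * Λ)) := by
  have hround (t) (ht : t ∈ Finset.Icc 1 T) (i : Fin m) :
      ℓ t i (x t j) + r (x t j) - ℓ t i w - r w ≤
        (ℓ t i (x t i) - ℓ t i z - ⟪g t i, x t i - z⟫) +
        (⟪g t i, x t i - z⟫ + r (x t i) - r z) + (Gℓ + Gr) * N (x t j - x t i) +
        (Gℓ + Gr) * Λ := by
    have hxj := hCK (hrun.mem hCconv hW.doublyStochastic ht j)
    have hxi := hCK (hrun.mem hCconv hW.doublyStochastic ht i)
    have hΛ' : (Gℓ + Gr) * N (z - w) ≤ (Gℓ + Gr) * Λ := mul_le_mul_of_nonneg_left hΛ hG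
    linarith [(hℓlip t ht i).sub_le hxj hxi, hrlip.sub_le hxj hxi,
      (hℓlip t ht i).sub_le (hCK hz) hw, hrlip.sub_le (hCK hz) hw]
  have hlin := hrun.sum_linearized_regret_le hφ hη hr hrlip hg hW.doublyStochastic hC hCconv hCK
    hΔ hz
  have hdis := mul_le_mul_of_nonneg_left
    (hrun.sum_disagreement_le hφ hη hr hrlip hg hD hW hC hCconv hCK j) hG
  refine (Finset.sum_le_sum fun t ht => Finset.sum_le_sum fun i _ => hround t ht i).trans ?_
  simp only [Finset.sum_add_distrib, Finset.sum_sub_distrib, ← Finset.mul_sum, Finset.sum_const,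
    Finset.card_univ, Fintype.card_fin, nsmul_eq_mul, Nat.card_Icc, Nat.add_sub_cancel]
    at hlin hdis ⊢
  linarith

end IsMirrorDescentRun

end MirrorDescentRun

section ShrunkenBody

variable {E : Type*} [NormedAddCommGroup E] [NormedSpace ℝ E] {K : Set E} {ξ : ℝ}

theorem closure_one_sub_smul_subset (hK : Convex ℝ K) (h0 : 0 ∈ interior K) (hξ0 : 0 < ξ)
    (hξ1 : ξ ≤ 1) : closure ((1 - ξ) • K) ⊆ K := by
  rw [closure_smul₀]
  rintro _ ⟨k, hk, rfl⟩
  simpa using interior_subset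
    (hK.combo_interior_closure_mem_interior h0 hk hξ0 (sub_nonneg.mpr hξ1) (by ring))

theorem add_smul_mem_of_mem_one_sub_smul (hK : Convex ℝ K) {R : ℝ}
    (hball : Metric.closedBall 0 R ⊆ K) (hξ0 : 0 < ξ) (hξ1 : ξ ≤ 1) {δ : ℝ} (hδ0 : 0 ≤ δ)
    (hδ : δ ≤ ξ * R) {a v : E} (ha : a ∈ (1 - ξ) • K) (hv : ‖v‖ ≤ 1) : a + δ • v ∈ K := by
  obtain ⟨k, hk, rfl⟩ := ha
  have hmem : (δ / ξ) • v ∈ K := hball <| mem_closedBall_zero_iff.mpr <| calc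
    ‖(δ / ξ) • v‖ = δ / ξ * ‖v‖ := by rw [norm_smul, Real.norm_of_nonneg (by positivity)]
    _ ≤ δ / ξ * 1 := by gcongr
    _ ≤ R := by rwa [mul_one, div_le_iff₀' hξ0]
  have hcomb := hK hk hmem (sub_nonneg.mpr hξ1) hξ0.le (by ring)
  rwa [smul_smul, mul_div_cancel₀ _ hξ0.ne'] at hcomb

variable {N : Seminorm ℝ E} {c R : ℝ}

theorem seminorm_sub_le_of_subset_closedBall (hc : 0 ≤ c) (hN : ∀ v, N v ≤ c * ‖v‖)
    (hK : K ⊆ Metric.closedBall 0 R) {a b : E} (ha : a ∈ K) (hb : b ∈ K) :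
    N (a - b) ≤ 2 * c * R := calc
  N (a - b) ≤ c * ‖a - b‖ := hN _
  _ ≤ c * (R + R) := by
    gcongr
    exact (norm_sub_le a b).trans
      (add_le_add (mem_closedBall_zero_iff.mp (hK ha)) (mem_closedBall_zero_iff.mp (hK hb)))
  _ = 2 * c * R := by ring

theorem seminorm_one_sub_smul_sub_le (hc : 0 ≤ c) (hN : ∀ v, N v ≤ c * ‖v‖)
    (hK : K ⊆ Metric.closedBall 0 R) (hξ : 0 ≤ ξ) {w : E} (hw : w ∈ K) :
    N ((1 - ξ) • w - w) ≤ ξ * (c * R) := calc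
  N ((1 - ξ) • w - w) = ξ * N w := by
    rw [show (1 - ξ) • w - w = -(ξ • w) by module, map_neg_eq_map, map_smul_eq_mul,
      Real.norm_of_nonneg hξ]
  _ ≤ ξ * (c * ‖w‖) := by gcongr; exact hN w
  _ ≤ ξ * (c * R) := by gcongr; exact mem_closedBall_zero_iff.mp (hK hw)

end ShrunkenBody

section BanditFeedback

variable {E : Type*} [NormedAddCommGroup E] [InnerProductSpace ℝ E]

theorem abs_inner_twoPointGradient_le {N : Seminorm ℝ E} {p q : ℝ} (hN : ∀ v, N v ≤ p * ‖v‖)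
    (hN' : ∀ v, ‖v‖ ≤ q * N v) {f : E → ℝ} {K : Set E} {G δ : ℝ} (hG : 0 ≤ G)
    (hf : SeminormLipschitzOn N G f K) (hδ : 0 < δ) {x u : E} (hu : ‖u‖ = 1)
    (hadd : x + δ • u ∈ K) (hsub : x - δ • u ∈ K) (v : E) :
    |⟪twoPointGradient f δ x u, v⟫| ≤ p * q * Module.finrank ℝ E * G * N v := by
  have hdiff : |f (x + δ • u) - f (x - δ • u)| ≤ 2 * δ * (p * G) := calc
    _ ≤ G * N (x + δ • u - (x - δ • u)) := hf _ hadd _ hsub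
    _ = G * (2 * δ * N u) := by
      rw [show x + δ • u - (x - δ • u) = (2 * δ) • u by module, map_smul_eq_mul,
        Real.norm_of_nonneg (by positivity)]
    _ ≤ G * (2 * δ * p) := by gcongr; simpa [hu] using hN u
    _ = 2 * δ * (p * G) := by ring
  calc _ ≤ ‖twoPointGradient f δ x u‖ * ‖v‖ := abs_real_inner_le_norm _ _
    _ ≤ Module.finrank ℝ E * (p * G) * (q * N v) :=
        mul_le_mul (norm_twoPointGradient_le hδ hu hdiff) (hN' v) (norm_nonneg v)
          ((norm_nonneg _).trans (norm_twoPointGradient_le hδ hu hdiff))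
    _ = _ := by ring

variable {m T : ℕ} {Ω : Type*} [MeasurableSpace E]

theorem measurable_iterate [BorelSpace E] [FiniteDimensional ℝ E] {F : ℕ → MeasurableSpace Ω}
    {W : ℕ → Matrix (Fin m) (Fin m) ℝ} {x y : ℕ → Fin m → Ω → E} {x0 : E}
    (hinit : ∀ i o, x 1 i o = x0)
    (hupdate : ∀ t ∈ Finset.Icc 1 T, ∀ i o, x (t + 1) i o = ∑ j, W t i j • y t j o)
    (hy : ∀ t ∈ Finset.Icc 1 T, ∀ i, Measurable[F (t + 1)] (y t i)) {t : ℕ}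
    (ht : t ∈ Finset.Icc 1 T) (i : Fin m) : Measurable[F t] (x t i) := by
  obtain ⟨h1, hT⟩ := Finset.mem_Icc.mp ht
  obtain ⟨s, rfl⟩ := Nat.exists_eq_add_of_le' h1
  rcases s.eq_zero_or_pos with rfl | hs
  · rw [show x (0 + 1) i = fun _ => x0 from funext (hinit i)]
    exact measurable_const
  · have hsT : s ∈ Finset.Icc 1 T := Finset.mem_Icc.mpr ⟨hs, by omega⟩
    rw [show x (s + 1) i = fun o => ∑ j, W s i j • y s j o from funext (hupdate s hsT i)]
    exact Finset.measurable_fun_sum _ fun j _ => (measurable_const_smul (W s i j)).comp (hy s hsT j)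

variable [MeasurableSpace Ω]

/-- In each of the rounds `1, …, T` every node explores in a direction `u t i` that is uniform on
the unit sphere and independent of the information `F t` available before the round. -/
structure IsSphericalExploration (P : Measure Ω) (F : ℕ → MeasurableSpace Ω) (T : ℕ)
    (u : ℕ → Fin m → Ω → E) : Prop where
  le : ∀ t, F t ≤ ‹MeasurableSpace Ω›
  isUniformOnSphere : ∀ t ∈ Finset.Icc 1 T, ∀ i, IsUniformOnSphere (P.map (u t i))
  indep : ∀ t ∈ Finset.Icc 1 T, ∀ i,
    ProbabilityTheory.Indep (.comap (u t i) inferInstance) (F t) P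

namespace IsSphericalExploration

variable {P : Measure Ω} {F : ℕ → MeasurableSpace Ω} {u : ℕ → Fin m → Ω → E}

theorem aemeasurable (hu : IsSphericalExploration P F T u) {t : ℕ} (ht : t ∈ Finset.Icc 1 T)
    (i : Fin m) : AEMeasurable (u t i) P :=
  have := (hu.isUniformOnSphere t ht i).toIsProbabilityMeasure
  AEMeasurable.of_map_ne_zero (IsProbabilityMeasure.ne_zero _)

theorem ae_norm_eq_one (hu : IsSphericalExploration P F T u) :
    ∀ᵐ o ∂P, ∀ t ∈ Finset.Icc 1 T, ∀ i, ‖u t i o‖ = 1 := by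
  simp only [ae_all_iff]
  exact fun t ht i =>
    ae_of_ae_map (hu.aemeasurable ht i) (hu.isUniformOnSphere t ht i).ae_norm_eq_one

theorem indepFun (hu : IsSphericalExploration P F T u) {t : ℕ} (ht : t ∈ Finset.Icc 1 T)
    (i : Fin m) {X : Ω → E} (hX : Measurable[F t] X) : X ⟂ᵢ[P] u t i :=
  ((ProbabilityTheory.IndepFun_iff_Indep _ _ _).mpr
    (ProbabilityTheory.indep_of_indep_of_le_right (hu.indep t ht i) hX.comap_le)).symm

variable [BorelSpace E] [FiniteDimensional ℝ E] [IsProbabilityMeasure P]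
  {ℓ : ℕ → Fin m → E → ℝ} {x : ℕ → Fin m → Ω → E} {C K : Set E} {δ G : ℝ} {z : E}

theorem integrable_sum_linearization_error (hu : IsSphericalExploration P F T u)
    (hℓ : ∀ t ∈ Finset.Icc 1 T, ∀ i, Continuous (ℓ t i)) (hC : Bornology.IsBounded C)
    (hx : ∀ t ∈ Finset.Icc 1 T, ∀ i, Measurable[F t] (x t i))
    (hxC : ∀ t ∈ Finset.Icc 1 T, ∀ i o, x t i o ∈ C) (δ : ℝ) (z : E) :
    Integrable (fun o => ∑ t ∈ Finset.Icc 1 T, ∑ i, (ℓ t i (x t i o) - ℓ t i z -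
      ⟪twoPointGradient (ℓ t i) δ (x t i o) (u t i o), x t i o - z⟫)) P :=
  integrable_finsetSum _ fun t ht => integrable_finsetSum _ fun i _ =>
    integrable_linearization_error (hℓ t ht i) hC ((hx t ht i).mono (hu.le t) le_rfl).aemeasurable
      (hu.aemeasurable ht i) (hxC t ht i) (hu.ae_norm_eq_one.mono fun _ ho => ho t ht i) δ z

theorem integral_sum_linearization_error_le (hu : IsSphericalExploration P F T u)
    (hℓ : ∀ t ∈ Finset.Icc 1 T, ∀ i, ConvexOn ℝ Set.univ (ℓ t i)) (hK : Bornology.IsBounded K)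
    (hlip : ∀ t ∈ Finset.Icc 1 T, ∀ i, ∀ a ∈ K, ∀ b ∈ K, |ℓ t i a - ℓ t i b| ≤ G * ‖a - b‖)
    (hδ : 0 < δ) (hCK : ∀ a ∈ C, ∀ v : E, ‖v‖ ≤ 1 → a + δ • v ∈ K)
    (hx : ∀ t ∈ Finset.Icc 1 T, ∀ i, Measurable[F t] (x t i))
    (hxC : ∀ t ∈ Finset.Icc 1 T, ∀ i o, x t i o ∈ C) (hz : z ∈ C) :
    ∫ o, ∑ t ∈ Finset.Icc 1 T, ∑ i, (ℓ t i (x t i o) - ℓ t i z -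
      ⟪twoPointGradient (ℓ t i) δ (x t i o) (u t i o), x t i o - z⟫) ∂P ≤
        T * (m * (2 * δ * G)) := by
  have hsubset : C ⊆ K := fun a ha => by simpa using hCK a ha 0 (by simp)
  have hmeas (t) (ht : t ∈ Finset.Icc 1 T) (i : Fin m) : AEMeasurable (x t i) P :=
    ((hx t ht i).mono (hu.le t) le_rfl).aemeasurable
  have hint (t) (ht : t ∈ Finset.Icc 1 T) (i : Fin m) := integrable_linearization_error
    (hℓ t ht i).locallyLipschitz.continuous (hK.subset hsubset) (hmeas t ht i)
    (hu.aemeasurable ht i) (hxC t ht i) (hu.ae_norm_eq_one.mono fun _ ho => ho t ht i) δ z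
  rw [integral_finsetSum _ fun t ht => integrable_finsetSum _ fun i _ => hint t ht i]
  calc _ ≤ ∑ t ∈ Finset.Icc 1 T, ∑ _i : Fin m, 2 * δ * G :=
        Finset.sum_le_sum fun t ht => by
          rw [integral_finsetSum _ fun i _ => hint t ht i]
          exact Finset.sum_le_sum fun i _ => integral_linearization_error_le (hmeas t ht i)
            (hu.aemeasurable ht i) (hu.indepFun ht i (hx t ht i)) (hu.isUniformOnSphere t ht i)
            (hℓ t ht i) hK (hlip t ht i) hδ (fun o => hCK _ (hxC t ht i o)) (hCK z hz)
    _ = T * (m * (2 * δ * G)) := by simp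

end IsSphericalExploration

end BanditFeedback

section DualNorm

theorem exists_pos_mul_norm_le_seminorm {E : Type*} [NormedAddCommGroup E] [NormedSpace ℝ E]
    [FiniteDimensional ℝ E] {N : Seminorm ℝ E} (hN : ∀ v, v ≠ 0 → 0 < N v) :
    ∃ c > 0, ∀ v, c * ‖v‖ ≤ N v := by
  rcases subsingleton_or_nontrivial E with _ | _
  · exact ⟨1, one_pos, fun v => by simp [Subsingleton.elim v 0]⟩
  obtain ⟨a, ha, hmin⟩ := (isCompact_sphere (0 : E) 1).exists_isMinOn
    (NormedSpace.sphere_nonempty.mpr zero_le_one)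
    N.convexOn.locallyLipschitz.continuous.continuousOn
  refine ⟨N a, hN a (ne_zero_of_mem_unit_sphere ⟨a, ha⟩), fun v => ?_⟩
  rcases eq_or_ne v 0 with rfl | hv
  · simp
  have hle : N a ≤ N (‖v‖⁻¹ • v) := hmin (by simp [norm_smul, hv])
  rwa [map_smul_eq_mul, norm_inv, norm_norm, ← div_eq_inv_mul, le_div_iff₀ (norm_pos_iff.mpr hv)]
    at hle

variable {d : ℕ} {N : Seminorm ℝ (Euc d)}

theorem inner_le_dualNorm_mul (hN : ∀ v, v ≠ 0 → 0 < N v) (g v : Euc d) :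
    ⟪g, v⟫ ≤ dualNorm d N g * N v := by
  rcases eq_or_ne v 0 with rfl | hv
  · simp
  obtain ⟨c, hc, hcN⟩ := exists_pos_mul_norm_le_seminorm hN
  have hbdd : BddAbove ((fun x => ⟪g, x⟫) '' {x : Euc d | N x ≤ 1}) := by
    refine ⟨‖g‖ * (1 / c), ?_⟩
    rintro _ ⟨z, hz, rfl⟩
    refine (real_inner_le_norm g z).trans ?_
    gcongr
    exact (le_div_iff₀' hc).mpr ((hcN z).trans hz)
  have hunit : N ((N v)⁻¹ • v) ≤ 1 := by
    rw [map_smul_eq_mul, norm_inv, Real.norm_of_nonneg (hN v hv).le, inv_mul_cancel₀ (hN v hv).ne']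
  have hle : ⟪g, (N v)⁻¹ • v⟫ ≤ dualNorm d N g := le_csSup hbdd ⟨_, hunit, rfl⟩
  rwa [inner_smul_right, inv_mul_le_iff₀' (hN v hv)] at hle

theorem norm_le_mul_of_dualNorm_le {q : ℝ} (hN : ∀ v, v ≠ 0 → 0 < N v)
    (hq : ∀ v, dualNorm d N v ≤ q * ‖v‖) (v : Euc d) : ‖v‖ ≤ q * N v := by
  rcases eq_or_ne v 0 with rfl | hv
  · simp
  refine le_of_mul_le_mul_left ?_ (norm_pos_iff.mpr hv)
  calc ‖v‖ * ‖v‖ = ⟪v, v⟫ := (real_inner_self_eq_norm_mul_norm v).symm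
    _ ≤ dualNorm d N v * N v := inner_le_dualNorm_mul hN v v
    _ ≤ q * ‖v‖ * N v := by gcongr; exact hq v
    _ = ‖v‖ * (q * N v) := by ring

theorem isMirrorMap_of_dualNorm_le (hN : ∀ v, v ≠ 0 → 0 < N v) {K : Set (Euc d)}
    (hK : Convex ℝ K) {φ : Euc d → ℝ} {φ' : Euc d → Euc d} (hφ : ∀ x, HasGradientAt φ (φ' x) x)
    {σ G : ℝ} (hσ : 0 < σ) (hG : 0 ≤ G)
    (hstrong : ∀ x ∈ K, ∀ y ∈ K, φ x ≥ φ y + ⟪φ' y, x - y⟫ + σ / 2 * N (x - y) ^ 2)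
    (hlip : ∀ x ∈ K, ∀ y ∈ K, dualNorm d N (φ' x - φ' y) ≤ G * N (x - y))
    (hconv : ∀ (n : ℕ) (α : Fin n → ℝ) (ys : Fin n → Euc d) (a : Euc d), a ∈ K →
      (∀ i, 0 ≤ α i) → ∑ i, α i = 1 → (∀ i, ys i ∈ K) →
      bregmanDiv φ φ' a (∑ i, α i • ys i) ≤ ∑ i, α i * bregmanDiv φ φ' a (ys i)) :
    IsMirrorMap N K φ φ' σ G where
  modulus_pos := hσ
  lipschitz_nonneg := hG
  hasFDerivAt x := hφ x
  strong_convexity x hx y hy := by unfold bregmanDiv; linarith [hstrong x hx y hy]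
  lipschitz x hx y hy v := (inner_le_dualNorm_mul hN _ v).trans (by gcongr; exact hlip x hx y hy)
  convexOn_right a ha := ⟨hK, fun y hy z hz s t hs ht hst => by
    simpa [Fin.sum_univ_two] using hconv 2 ![s, t] ![y, z] a ha
      (by simp [Fin.forall_fin_two, hs, ht]) (by simpa using hst)
      (by simp [Fin.forall_fin_two, hy, hz])⟩

end DualNorm

theorem IsSphericalExploration.of_iSup_comap {E : Type*} [NormedAddCommGroup E]
    [InnerProductSpace ℝ E] [MeasurableSpace E] {m T : ℕ} {Ω : Type*} [MeasurableSpace Ω]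
    {P : Measure Ω} {u : ℕ → Fin m → Ω → E} (hmeas : ∀ t i, Measurable (u t i)) {μ : Measure E}
    (hμ : IsUniformOnSphere μ) (hlaw : ∀ t ∈ Finset.Icc 1 T, ∀ i, P.map (u t i) = μ)
    {F : ℕ → MeasurableSpace Ω}
    (hF : ∀ t, F t = ⨆ (j : Fin m) (s : ℕ) (_ : s < t), .comap (u s j) inferInstance)
    (hindep : ∀ t ∈ Finset.Icc 1 T,
      ProbabilityTheory.Indep (⨆ i : Fin m, .comap (u t i) inferInstance) (F t) P) :
    IsSphericalExploration P F T u where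
  le t := by
    rw [hF]
    exact iSup_le fun j => iSup₂_le fun s _ => (hmeas s j).comap_le
  isUniformOnSphere t ht i := by rwa [hlaw t ht i]
  indep t ht i := ProbabilityTheory.indep_of_indep_of_le_left (hindep t ht)
    (le_iSup (fun i : Fin m => MeasurableSpace.comap (u t i) inferInstance) i)

section BanditRegret

variable {E : Type*} [NormedAddCommGroup E] {m T : ℕ} {ℓ : ℕ → Fin m → E → ℝ} {r : E → ℝ}

theorem integrable_sum_regret [MeasurableSpace E] [BorelSpace E] {Ω : Type*} [MeasurableSpace Ω]
    {P : Measure Ω} [IsFiniteMeasure P] {C : Set E} (hC : IsCompact C)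
    (hℓ : ∀ t ∈ Finset.Icc 1 T, ∀ i, Continuous (ℓ t i)) (hr : Continuous r)
    {x : ℕ → Ω → E} (hx : ∀ t ∈ Finset.Icc 1 T, AEMeasurable (x t) P)
    (hxC : ∀ t ∈ Finset.Icc 1 T, ∀ o, x t o ∈ C) (w : E) :
    Integrable (fun o => ∑ t ∈ Finset.Icc 1 T, ∑ i,
      (ℓ t i (x t o) + r (x t o) - ℓ t i w - r w)) P := by
  refine integrable_finsetSum _ fun t ht => integrable_finsetSum _ fun i _ => ?_
  have := hℓ t ht i
  exact integrable_comp_of_ae_mem_isCompact (f := fun a => ℓ t i a + r a - ℓ t i w - r w)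
    (by fun_prop) (hx t ht) hC (.of_forall (hxC t ht))

theorem integral_le_add_of_ae_le_add_const {Ω : Type*} [MeasurableSpace Ω] {P : Measure Ω}
    [IsProbabilityMeasure P] {f g : Ω → ℝ} {b c : ℝ} (hf : Integrable f P) (hg : Integrable g P)
    (hfg : ∀ᵐ o ∂P, f o ≤ g o + c) (hb : ∫ o, g o ∂P ≤ b) : ∫ o, f o ∂P ≤ b + c := calc
  ∫ o, f o ∂P ≤ ∫ o, (g o + c) ∂P := integral_mono_ae hf (hg.add (integrable_const c)) hfg
  _ = ∫ o, g o ∂P + c := by rw [integral_add hg (integrable_const c)]; simp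
  _ ≤ b + c := by gcongr

variable [InnerProductSpace ℝ E] [FiniteDimensional ℝ E] {N : Seminorm ℝ E} {p q : ℝ} {K : Set E}
  {Rin R : ℝ} {φ : E → ℝ} {φ' : E → E} {σ Gω Gℓ Gr η ξ δ : ℝ} {ρ : ℕ → ℝ}
  {W : ℕ → Matrix (Fin m) (Fin m) ℝ} {θ κ : ℝ} {x0 w : E}

theorem sum_regret_twoPointGradient_le (hp : 0 ≤ p) (hq : 0 ≤ q)
    (hN : ∀ v, N v ≤ p * ‖v‖) (hN' : ∀ v, ‖v‖ ≤ q * N v) (hK : Convex ℝ K)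
    (hball : Metric.closedBall 0 Rin ⊆ K) (hKR : K ⊆ Metric.closedBall 0 R)
    (hφ : IsMirrorMap N K φ φ' σ Gω) (hGℓ : 0 ≤ Gℓ) (hGr : 0 ≤ Gr)
    (hℓN : ∀ t ∈ Finset.Icc 1 T, ∀ i, SeminormLipschitzOn N Gℓ (ℓ t i) K)
    (hr : ConvexOn ℝ Set.univ r) (hrN : SeminormLipschitzOn N Gr r K) (hη : 0 < η)
    (hξ0 : 0 < ξ) (hξ1 : ξ ≤ 1) (hδ0 : 0 < δ) (hδ : δ ≤ ξ * Rin)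
    (hW : IsGeometricallyMixing W T θ κ) {u x y : ℕ → Fin m → E}
    (hrun : IsMirrorDescentRun W T φ φ' r η ρ ((1 - ξ) • K) x0
      (fun t i => twoPointGradient (ℓ t i) δ (x t i) (u t i)) x y)
    (hu : ∀ t ∈ Finset.Icc 1 T, ∀ i, ‖u t i‖ = 1) (hw : w ∈ K) (j : Fin m) :
    ∑ t ∈ Finset.Icc 1 T, ∑ i, (ℓ t i (x t j) + r (x t j) - ℓ t i w - r w) ≤
      ∑ t ∈ Finset.Icc 1 T, ∑ i, (ℓ t i (x t i) - ℓ t i ((1 - ξ) • w) -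
        ⟪twoPointGradient (ℓ t i) δ (x t i) (u t i), x t i - (1 - ξ) • w⟫) +
      (m * bregmanDiv φ φ' ((1 - ξ) • w) x0 / η +
        T * (m / σ * ((p * q * Module.finrank ℝ E * Gℓ + Gr) ^ 2 / 2 +
          2 * θ / (1 - κ) * (Gℓ + Gr) * (p * q * Module.finrank ℝ E * Gℓ + Gr)) * η) +
        m * √(2 / σ) * (2 * θ / (1 - κ) * (Gℓ + Gr)) * ∑ t ∈ Finset.Icc 1 T, √(η * ρ t) +
        2 * m * √(2 / σ) * p * Gω * R * ∑ t ∈ Finset.Icc 1 T, √(ρ t / η) +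
        T * (m * p * (Gℓ + Gr) * R * ξ)) := by
  have hRin : 0 < Rin := pos_of_mul_pos_right (hδ0.trans_le hδ) hξ0.le
  have hCK : closure ((1 - ξ) • K) ⊆ K := closure_one_sub_smul_subset hK
    (mem_interior_iff_mem_nhds.mpr <|
      Filter.mem_of_superset (Metric.closedBall_mem_nhds 0 hRin) hball) hξ0 hξ1
  have hC : IsCompact (closure ((1 - ξ) • K)) :=
    ((Metric.isBounded_closedBall.subset hKR).smul₀ _).isCompact_closure
  have hadd (t) (ht : t ∈ Finset.Icc 1 T) (i : Fin m) (v : E) (hv : ‖v‖ = 1) :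
      x t i + δ • v ∈ K := add_smul_mem_of_mem_one_sub_smul hK hball hξ0 hξ1 hδ0.le hδ
    (hrun.mem (hK.smul _) hW.doublyStochastic ht i) hv.le
  have hgrad (t) (ht : t ∈ Finset.Icc 1 T) (i : Fin m) (v : E) :
      |⟪twoPointGradient (ℓ t i) δ (x t i) (u t i), v⟫| ≤
        p * q * Module.finrank ℝ E * Gℓ * N v :=
    abs_inner_twoPointGradient_le hN hN' hGℓ (hℓN t ht i) hδ0 (hu t ht i)
      (hadd t ht i _ (hu t ht i))
      (by simpa [sub_eq_add_neg] using hadd t ht i (-u t i) (by simp [hu t ht i])) v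
  have hregret := (hrun.closure hr.locallyLipschitz.continuous hφ.continuous).sum_regret_le
    hφ hη hr hrN hgrad (by positivity) hW hC (hK.smul _).closure hCK
    (fun a ha b hb => seminorm_sub_le_of_subset_closedBall hp hN hKR (hCK ha) (hCK hb))
    hℓN (by positivity) (subset_closure (Set.smul_mem_smul_set hw)) hw
    (seminorm_one_sub_smul_sub_le hp hN hKR hξ0.le hw) j
  exact hregret.trans_eq (by ring)

variable [MeasurableSpace E] [BorelSpace E] {Ω : Type*} [MeasurableSpace Ω] {P : Measure Ω}
  [IsProbabilityMeasure P] {F : ℕ → MeasurableSpace Ω} {u x y : ℕ → Fin m → Ω → E}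

theorem banodcmd_regret_bound_general (hT : 0 < T) (hp : 0 ≤ p) (hq : 0 ≤ q)
    (hN : ∀ v, N v ≤ p * ‖v‖) (hN' : ∀ v, ‖v‖ ≤ q * N v) (hK : Convex ℝ K)
    (hball : Metric.closedBall 0 Rin ⊆ K) (hKR : K ⊆ Metric.closedBall 0 R)
    (hφ : IsMirrorMap N K φ φ' σ Gω) (hGℓ : 0 ≤ Gℓ) (hGr : 0 ≤ Gr)
    (hℓ : ∀ t ∈ Finset.Icc 1 T, ∀ i, ConvexOn ℝ Set.univ (ℓ t i))
    (hℓN : ∀ t ∈ Finset.Icc 1 T, ∀ i, SeminormLipschitzOn N Gℓ (ℓ t i) K)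
    (hℓ2 : ∀ t ∈ Finset.Icc 1 T, ∀ i, ∀ a ∈ K, ∀ b ∈ K, |ℓ t i a - ℓ t i b| ≤ Gℓ * ‖a - b‖)
    (hr : ConvexOn ℝ Set.univ r) (hrN : SeminormLipschitzOn N Gr r K) (hη : 0 < η)
    (hξ0 : 0 < ξ) (hξ1 : ξ ≤ 1) (hδ0 : 0 < δ) (hδ : δ ≤ ξ * Rin)
    (hW : IsGeometricallyMixing W T θ κ) (hu : IsSphericalExploration P F T u)
    (hrun : ∀ o, IsMirrorDescentRun W T φ φ' r η ρ ((1 - ξ) • K) x0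
      (fun t i => twoPointGradient (ℓ t i) δ (x t i o) (u t i o)) (fun t i => x t i o)
      fun t i => y t i o)
    (hy : ∀ t ∈ Finset.Icc 1 T, ∀ i, Measurable[F (t + 1)] (y t i)) (hw : w ∈ K) (j : Fin m) :
    ∫ o, 1 / (T : ℝ) * ∑ t ∈ Finset.Icc 1 T, ∑ i,
        (ℓ t i (x t j o) + r (x t j o) - ℓ t i w - r w) ∂P ≤
      m * bregmanDiv φ φ' ((1 - ξ) • w) x0 / (η * T) +
        m / σ * ((p * q * Module.finrank ℝ E * Gℓ + Gr) ^ 2 / 2 +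
          2 * θ / (1 - κ) * (Gℓ + Gr) * (p * q * Module.finrank ℝ E * Gℓ + Gr)) * η +
        m * √(2 / σ) * (2 * θ / (1 - κ) * (Gℓ + Gr)) / T * ∑ t ∈ Finset.Icc 1 T, √(η * ρ t) +
        2 * m * √(2 / σ) * p * Gω * R / T * ∑ t ∈ Finset.Icc 1 T, √(ρ t / η) +
        2 * m * Gℓ * δ + m * p * (Gℓ + Gr) * R * ξ := by
  have hKbdd : Bornology.IsBounded K := Metric.isBounded_closedBall.subset hKR
  have hxC (t) (ht : t ∈ Finset.Icc 1 T) (i : Fin m) (o : Ω) : x t i o ∈ (1 - ξ) • K :=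
    (hrun o).mem (hK.smul _) hW.doublyStochastic ht i
  have hx (t) (ht : t ∈ Finset.Icc 1 T) (i : Fin m) : Measurable[F t] (x t i) :=
    measurable_iterate (fun i o => (hrun o).init i) (fun t ht i o => (hrun o).update t ht i) hy ht i
  have hℓc (t) (ht : t ∈ Finset.Icc 1 T) (i : Fin m) : Continuous (ℓ t i) :=
    (hℓ t ht i).locallyLipschitz.continuous
  have hregret := integral_le_add_of_ae_le_add_const
    (integrable_sum_regret (hKbdd.smul₀ (1 - ξ)).isCompact_closure hℓc
      hr.locallyLipschitz.continuous (fun t ht => ((hx t ht j).mono (hu.le t) le_rfl).aemeasurable)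
      (fun t ht o => subset_closure (hxC t ht j o)) w)
    (hu.integrable_sum_linearization_error hℓc (hKbdd.smul₀ (1 - ξ)) hx hxC δ ((1 - ξ) • w))
    (hu.ae_norm_eq_one.mono fun o ho => sum_regret_twoPointGradient_le hp hq hN hN'
      hK hball hKR hφ hGℓ hGr hℓN hr hrN hη hξ0 hξ1 hδ0 hδ hW (hrun o) ho hw j)
    (hu.integral_sum_linearization_error_le hℓ hKbdd hℓ2 hδ0
      (fun a ha v => add_smul_mem_of_mem_one_sub_smul hK hball hξ0 hξ1 hδ0.le hδ ha) hx hxC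
      (Set.smul_mem_smul_set hw))
  rw [integral_const_mul]
  refine (mul_le_mul_of_nonneg_left hregret (by positivity)).trans_eq ?_
  field_simp
  ring

end BanditRegret

/-- **Bandit online distributed composite mirror descent (Theorem 2).**
In the BanODCMD setting, for every node `j` and every comparator `x★ ∈ K`, the expected
average regularized regret is bounded by
`B₀/T + B₁/(ηT) + B₂η + (B₃/T) Σ_t √(ηρ_t) + (B₄/T) Σ_t √(ρ_t/η) + B₅δ + B₆ξ`. -/
theorem banodcmd_regret_bound
    (d m T : ℕ) (hd : 1 ≤ d) (hm : 1 ≤ m) (hT : 1 ≤ T)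
    -- N is a norm on ℝ^d, comparable with the Euclidean norm
    (N : Euc d → ℝ)
    (hN_add : ∀ x y, N (x + y) ≤ N x + N y)
    (hN_smul : ∀ (c : ℝ) (x : Euc d), N (c • x) = |c| * N x)
    (hN_pos : ∀ x : Euc d, x ≠ 0 → 0 < N x)
    (pb pbs : ℝ) (hpb : 0 < pb) (hpbs : 0 < pbs)
    (hNle : ∀ x : Euc d, N x ≤ pb * ‖x‖)
    (hNsle : ∀ x : Euc d, dualNorm d N x ≤ pbs * ‖x‖)
    -- K is convex, contains the ball of radius Rin and is contained in the ball Rb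
    (K : Set (Euc d)) (hKconv : Convex ℝ K)
    (Rin Rb : ℝ) (hRin : 0 < Rin)
    (hball : Metric.closedBall (0 : Euc d) Rin ⊆ K)
    (hKRb : K ⊆ Metric.closedBall (0 : Euc d) Rb)
    -- φ is differentiable with gradient φ', Bregman divergence V
    (φ : Euc d → ℝ) (φ' : Euc d → Euc d)
    (hgrad : ∀ x, HasGradientAt φ (φ' x) x)
    (V : Euc d → Euc d → ℝ)
    (hV : ∀ x y, V x y = φ x - φ y - ⟪φ' y, x - y⟫)
    -- φ is σ_ω-strongly convex w.r.t. N on K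
    (σω : ℝ) (hσ : 0 < σω)
    (hstrong : ∀ x ∈ K, ∀ y ∈ K, φ x ≥ φ y + ⟪φ' y, x - y⟫ + σω / 2 * N (x - y) ^ 2)
    -- ∇φ is G_ω-Lipschitz w.r.t. N on K
    (Gω : ℝ) (hGω : 0 ≤ Gω)
    (hφlip : ∀ x ∈ K, ∀ y ∈ K, dualNorm d N (φ' x - φ' y) ≤ Gω * N (x - y))
    -- V is convex in its second argument on K
    (hVconv : ∀ (n : ℕ) (α : Fin n → ℝ) (ys : Fin n → Euc d) (a : Euc d),
      a ∈ K → (∀ i, 0 ≤ α i) → ∑ i, α i = 1 → (∀ i, ys i ∈ K) →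
      V a (∑ i, α i • ys i) ≤ ∑ i, α i * V a (ys i))
    -- loss functions and regularizer
    (ℓ : ℕ → Fin m → Euc d → ℝ) (r : Euc d → ℝ)
    (Gℓ Gr : ℝ) (hGℓ : 0 ≤ Gℓ) (hGr : 0 ≤ Gr)
    (hℓconv : ∀ t ∈ Finset.Icc 1 T, ∀ i, ConvexOn ℝ Set.univ (ℓ t i))
    (hℓlipN : ∀ t ∈ Finset.Icc 1 T, ∀ i, ∀ x ∈ K, ∀ y ∈ K,
      |ℓ t i x - ℓ t i y| ≤ Gℓ * N (x - y))
    (hℓlip2 : ∀ t ∈ Finset.Icc 1 T, ∀ i, ∀ x ∈ K, ∀ y ∈ K,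
      |ℓ t i x - ℓ t i y| ≤ Gℓ * ‖x - y‖)
    (hrconv : ConvexOn ℝ Set.univ r)
    (hrlip : ∀ x ∈ K, ∀ y ∈ K, |r x - r y| ≤ Gr * N (x - y))
    -- algorithm parameters
    (η : ℝ) (hη : 0 < η) (ρ : ℕ → ℝ) (hρ : ∀ t, 0 ≤ ρ t)
    (ξ : ℝ) (hξ0 : 0 < ξ) (hξ1 : ξ < 1)
    (δ : ℝ) (hδ0 : 0 < δ) (hδ : δ ≤ ξ * Rin)
    -- W(1), …, W(T) are doubly stochastic with geometrically mixing backward products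
    (W : ℕ → Matrix (Fin m) (Fin m) ℝ)
    (hW : ∀ t ∈ Finset.Icc 1 T,
      (∀ i j, 0 ≤ W t i j) ∧ (∀ i, ∑ j, W t i j = 1) ∧ (∀ j, ∑ i, W t i j = 1))
    (θ κ : ℝ) (hθ : 0 < θ) (hκ0 : 0 < κ) (hκ1 : κ < 1)
    (hP : ∀ τ t : ℕ, 1 ≤ τ → τ ≤ t → t ≤ T → ∀ i,
      ∑ j, |backProd W t τ i j - 1 / (m : ℝ)| ≤ θ * κ ^ (t - τ))
    -- probabilistic setting
    (Ω : Type) [MeasureSpace Ω] (hprob : IsProbabilityMeasure (ℙ : Measure Ω))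
    (u : ℕ → Fin m → Ω → Euc d)
    (hu_meas : ∀ t i, Measurable (u t i))
    -- each u_{i,t} is uniformly distributed on the Euclidean unit sphere:
    -- its law is the rotation-invariant probability measure carried by the sphere
    (μunif : Measure (Euc d)) (hμprob : IsProbabilityMeasure μunif)
    (hμsphere : μunif {v : Euc d | ‖v‖ = 1}ᶜ = 0)
    (hμinv : ∀ R : Euc d ≃ₗᵢ[ℝ] Euc d, μunif.map (⇑R) = μunif)
    (hu_law : ∀ t ∈ Finset.Icc 1 T, ∀ i, Measure.map (u t i) ℙ = μunif)
    -- the filtration generated by the past draws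
    (F : ℕ → MeasurableSpace Ω)
    (hF : ∀ t, F t = ⨆ (j : Fin m) (s : ℕ) (_ : s < t),
      MeasurableSpace.comap (u s j) inferInstance)
    -- at each round the draws are mutually independent and independent of the past
    (hu_indep : ∀ t ∈ Finset.Icc 1 T,
      ProbabilityTheory.iIndepFun (fun i => u t i) ℙ)
    (hu_indepF : ∀ t ∈ Finset.Icc 1 T,
      ProbabilityTheory.Indep
        (⨆ i : Fin m, MeasurableSpace.comap (u t i) inferInstance) (F t) ℙ)
    -- iterates of the algorithm (pathwise)
    (x y : ℕ → Fin m → Ω → Euc d)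
    (ghat : ℕ → Fin m → Ω → Euc d)
    (hghat : ∀ t i ωp, ghat t i ωp =
      ((d : ℝ) / (2 * δ) *
        (ℓ t i (x t i ωp + δ • u t i ωp) - ℓ t i (x t i ωp - δ • u t i ωp))) • u t i ωp)
    -- common deterministic initialization: a minimizer of φ over (1-ξ)K
    (x0 : Euc d) (hx0K : x0 ∈ (1 - ξ) • K)
    (hx0min : ∀ z ∈ (1 - ξ) • K, φ x0 ≤ φ z)
    (hinit : ∀ i ωp, x 1 i ωp = x0)
    -- y_{i,t} is an ℱ_{t+1}-measurable ρ_t-approximate minimizer over (1-ξ)K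
    (hy_meas : ∀ t ∈ Finset.Icc 1 T, ∀ i, Measurable[F (t + 1)] (y t i))
    (hy_mem : ∀ t ∈ Finset.Icc 1 T, ∀ i ωp, y t i ωp ∈ (1 - ξ) • K)
    (hy_approx : ∀ t ∈ Finset.Icc 1 T, ∀ i ωp, ∀ z ∈ (1 - ξ) • K,
      ⟪ghat t i ωp, y t i ωp⟫ + r (y t i ωp) + 1 / η * V (y t i ωp) (x t i ωp) ≤
        ⟪ghat t i ωp, z⟫ + r z + 1 / η * V z (x t i ωp) + ρ t)
    (hupdate : ∀ t ∈ Finset.Icc 1 T, ∀ i ωp, x (t + 1) i ωp = ∑ j, W t i j • y t j ωp)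
    -- the constants of the bound
    (B0 B1 B2 B3 B4 B5 B6 : ℝ) (xstar : Euc d) (hxstar : xstar ∈ K)
    (hB0 : B0 = 2 * θ / (1 - κ) * (Gℓ + Gr) * ∑ _i : Fin m, N x0)
    (hB1 : B1 = ∑ _i : Fin m, V ((1 - ξ) • xstar) x0)
    (hB2 : B2 = (m : ℝ) / σω *
      ((pb * pbs * d * Gℓ) ^ 2 / 2 + Gr * (pb * pbs * d * Gℓ + Gr)
        + 2 * θ / (1 - κ) * (Gℓ + Gr) * (pb * pbs * d * Gℓ + Gr)))
    (hB3 : B3 = (m : ℝ) * Real.sqrt (2 / σω) *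
      (pb * pbs * d * Gℓ + 2 * θ / (1 - κ) * (Gℓ + Gr)))
    (hB4 : B4 = 4 * (m : ℝ) * Real.sqrt (2 / σω) * pb * Gω * Rb)
    (hB5 : B5 = 2 * (m : ℝ) * Gℓ)
    (hB6 : B6 = (m : ℝ) * pb * (Gℓ + Gr) * Rb) :
    ∀ j : Fin m,
      (∫ ωp, (1 / (T : ℝ) * ∑ t ∈ Finset.Icc 1 T, ∑ i,
          (ℓ t i (x t j ωp) + r (x t j ωp) - ℓ t i xstar - r xstar)) ∂ℙ) ≤
        B0 / T + B1 / (η * T) + B2 * η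
          + B3 / T * ∑ t ∈ Finset.Icc 1 T, Real.sqrt (η * ρ t)
          + B4 / T * ∑ t ∈ Finset.Icc 1 T, Real.sqrt (ρ t / η)
          + B5 * δ + B6 * ξ := by
  intro j
  obtain ⟨N, rfl⟩ : ∃ N' : Seminorm ℝ (Euc d), ⇑N' = N := ⟨.of N hN_add hN_smul, rfl⟩
  obtain rfl : V = bregmanDiv φ φ' := funext₂ hV
  obtain rfl : ghat = fun t i o => twoPointGradient (ℓ t i) δ (x t i o) (u t i o) := by
    simpa [funext_iff, twoPointGradient] using hghat
  have hRb : 0 ≤ Rb := (norm_nonneg _).trans (mem_closedBall_zero_iff.mp (hKRb hxstar))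
  have hB0' : 0 ≤ B0 / T := by
    rw [hB0]
    have := sub_pos.mpr hκ1
    positivity
  have hregret := banodcmd_regret_bound_general hT hpb.le hpbs.le hNle
    (norm_le_mul_of_dualNorm_le hN_pos hNsle) hKconv hball hKRb
    (isMirrorMap_of_dualNorm_le hN_pos hKconv hgrad hσ hGω hstrong hφlip hVconv) hGℓ hGr hℓconv
    hℓlipN hℓlip2 hrconv hrlip hη hξ0 hξ1.le hδ0 hδ
    ⟨fun t ht => mem_doublyStochastic_iff_sum.mpr (hW t ht), hP, hθ.le, hκ0.le, hκ1⟩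
    (.of_iSup_comap hu_meas ⟨hμprob, hμsphere, hμinv⟩ hu_law hF hu_indepF)
    (fun o => ⟨hx0K, fun i => hinit i o, fun t ht i => ⟨hy_mem t ht i o, hy_approx t ht i o⟩,
      fun t ht i => hupdate t ht i o⟩) hy_meas hxstar j
  refine (hregret.trans (le_add_of_nonneg_left hB0')).trans ?_
  simp only [← add_assoc, finrank_euclideanSpace_fin, hB1, hB2, hB3, hB4, hB5, hB6,
    Finset.sum_const, Finset.card_univ, Fintype.card_fin, nsmul_eq_mul]
  gcongr
  · nlinarith [sq_nonneg Gr]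
  · exact le_add_of_nonneg_left (by positivity)
  · norm_num
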